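/- arXiv:1401.6843 — 2 statements merged into one kernel-verified Lean document; each statement's English description precedes it below -/
import Mathlib

section
/- For every 1 ≤ i ≤ n²/2, the endomorphism algebra End_u(P_{2i,0} ⊕ P_{n²−2i+2,1}) of the left u-module P_{2i,0} ⊕ P_{n²−2i+2,1} is isomorphic, as a k-algebra, to the 8-dimensional algebra Λ := k⟨g,x,y⟩/(x², y², g²−1, gx+xg, gy+yg, xy−yx). -/
noncomputable section

open scoped TensorProduct

namespace QFL

/-- The defining relations of the quasi-Frobenius-Lusztig kernel `ũ_q(sl₂)`,
on the free algebra on four generators `K = ι 0`, `K̂ = ι 1`, `E = ι 2`, `F = ι 3`. -/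
inductive Rel (k : Type) [Field k] (n : ℕ) (q : k) :
    FreeAlgebra k (Fin 4) → FreeAlgebra k (Fin 4) → Prop
  | Kord : Rel k n q (FreeAlgebra.ι k (0 : Fin 4) ^ n) 1
  | Khord : Rel k n q (FreeAlgebra.ι k (1 : Fin 4) ^ n)
      ((FreeAlgebra.ι k (0 : Fin 4) ^ (n - 1)) ^ 2)
  | KKh : Rel k n q (FreeAlgebra.ι k (0 : Fin 4) * FreeAlgebra.ι k (1 : Fin 4))
      (FreeAlgebra.ι k (1 : Fin 4) * FreeAlgebra.ι k (0 : Fin 4))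
  | KE : Rel k n q
      (FreeAlgebra.ι k (0 : Fin 4) * FreeAlgebra.ι k (2 : Fin 4) *
        FreeAlgebra.ι k (0 : Fin 4) ^ (n - 1))
      (q ^ n • FreeAlgebra.ι k (2 : Fin 4))
  | KF : Rel k n q
      (FreeAlgebra.ι k (0 : Fin 4) * FreeAlgebra.ι k (3 : Fin 4) *
        FreeAlgebra.ι k (0 : Fin 4) ^ (n - 1))
      ((q ^ n)⁻¹ • FreeAlgebra.ι k (3 : Fin 4))
  | KhE : Rel k n q
      (FreeAlgebra.ι k (1 : Fin 4) * FreeAlgebra.ι k (2 : Fin 4) *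
        FreeAlgebra.ι k (1 : Fin 4) ^ (n ^ 2 - 1))
      ((q ^ n * (q ^ 2)⁻¹) • FreeAlgebra.ι k (2 : Fin 4))
  | KhF : Rel k n q
      (FreeAlgebra.ι k (1 : Fin 4) * FreeAlgebra.ι k (3 : Fin 4) *
        FreeAlgebra.ι k (1 : Fin 4) ^ (n ^ 2 - 1))
      (((q ^ n)⁻¹ * q ^ 2) • FreeAlgebra.ι k (3 : Fin 4))
  | Enil : Rel k n q (FreeAlgebra.ι k (2 : Fin 4) ^ n ^ 2) 0
  | Fnil : Rel k n q (FreeAlgebra.ι k (3 : Fin 4) ^ n ^ 2) 0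
  | EF : Rel k n q
      (FreeAlgebra.ι k (3 : Fin 4) * FreeAlgebra.ι k (2 : Fin 4) -
        q⁻¹ • (FreeAlgebra.ι k (2 : Fin 4) * FreeAlgebra.ι k (3 : Fin 4)))
      (1 - FreeAlgebra.ι k (0 : Fin 4) ^ (n - 1) * FreeAlgebra.ι k (1 : Fin 4))

/-- The algebra `ũ_q(sl₂)` as the quotient of the free algebra by the defining relations. -/
abbrev U (k : Type) [Field k] (n : ℕ) (q : k) := RingQuot (Rel k n q)

variable (k : Type) [Field k] (n : ℕ) (q : k)

def K : U k n q := RingQuot.mkAlgHom k (Rel k n q) (FreeAlgebra.ι k (0 : Fin 4))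
def Kh : U k n q := RingQuot.mkAlgHom k (Rel k n q) (FreeAlgebra.ι k (1 : Fin 4))
def E : U k n q := RingQuot.mkAlgHom k (Rel k n q) (FreeAlgebra.ι k (2 : Fin 4))
def F : U k n q := RingQuot.mkAlgHom k (Rel k n q) (FreeAlgebra.ι k (3 : Fin 4))

/-- `K⁻¹ = K^(n-1)`. -/
def Kinv : U k n q := K k n q ^ (n - 1)
/-- `K̂⁻¹ = K̂^(n²-1)`. -/
def Khinv : U k n q := Kh k n q ^ (n ^ 2 - 1)

/-- `φ_{2i} = (2/n²) Σ_{t<n²/2} q^{-2it} (K⁻¹K̂)^t`. -/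
def phi (i : ℕ) : U k n q :=
  ((n ^ 2 : k)⁻¹ * 2) • ∑ t ∈ Finset.range (n ^ 2 / 2),
    (q⁻¹ ^ (2 * i * t)) • (Kinv k n q * Kh k n q) ^ t

/-- `𝟙₀ = (1/2)(1 + KK̂^(n/2))` and `𝟙₁ = (1/2)(1 - KK̂^(n/2))`. -/
def oneJ (j : ℕ) : U k n q :=
  if j = 0 then (2 : k)⁻¹ • (1 + K k n q * Kh k n q ^ (n / 2))
  else (2 : k)⁻¹ • (1 - K k n q * Kh k n q ^ (n / 2))

/-- The idempotent `e_{2i,j} = φ_{2i} 𝟙_j`. -/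
def eIdem (i j : ℕ) : U k n q := phi k n q i * oneJ k n q j

/-- `α_{2i,j} = F^(n²-1) e_{2i,j}`. -/
def alpha (i j : ℕ) : U k n q := F k n q ^ (n ^ 2 - 1) * eIdem k n q i j

/-- `β_{2i,j} = E^(2i-2) α_{2i,j}`. -/
def beta (i j : ℕ) : U k n q := E k n q ^ (2 * i - 2) * alpha k n q i j

/-- The Gaussian number `s_q = 1 + q + ⋯ + q^(s-1)`. -/
def gauss (x : k) (s : ℕ) : k := ∑ t ∈ Finset.range s, x ^ t

/-- The span of the PBW-type monomials `F^a K^c K̂^d E^b` with `a ≤ n²-2`, `b ≤ n²-1`,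
`c ≤ n-1`, `d ≤ n²-1`. -/
def pbw : Submodule k (U k n q) :=
  Submodule.span k {x | ∃ a b c d : ℕ, a ≤ n ^ 2 - 2 ∧ b ≤ n ^ 2 - 1 ∧ c ≤ n - 1 ∧
    d ≤ n ^ 2 - 1 ∧ x = F k n q ^ a * K k n q ^ c * Kh k n q ^ d * E k n q ^ b}

/-- `γ_{2i,j}`: the unique element of the PBW span with `F·γ = β_{2i,j}`. -/
def gam (i j : ℕ) : U k n q :=
  @dite _ (∃! x, x ∈ pbw k n q ∧ F k n q * x = beta k n q i j)
    (Classical.propDecidable _) (fun h => h.choose) (fun _ => 0)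

/-- The left ideal `P_{2i,j} = u·γ_{2i,j}`. -/
def P (i j : ℕ) : Submodule (U k n q) (U k n q) :=
  Submodule.span (U k n q) {gam k n q i j}

/-- `S_{2i,j} = Soc(P_{2i,j})`, the sum of all simple submodules of `P_{2i,j}`. -/
def S (i j : ℕ) : Submodule (U k n q) (U k n q) :=
  sSup {N : Submodule (U k n q) (U k n q) | N ≤ P k n q i j ∧ IsSimpleModule (U k n q) N}

end QFL

namespace QFL

/-- The defining relations of the 8-dimensional algebra
`Λ = k⟨g,x,y⟩/(x², y², g²-1, gx+xg, gy+yg, xy-yx)`, with `g = ι 0`, `x = ι 1`, `y = ι 2`. -/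
inductive LambdaRel (k : Type) [Field k] :
    FreeAlgebra k (Fin 3) → FreeAlgebra k (Fin 3) → Prop
  | x2 : LambdaRel k (FreeAlgebra.ι k (1 : Fin 3) ^ 2) 0
  | y2 : LambdaRel k (FreeAlgebra.ι k (2 : Fin 3) ^ 2) 0
  | g2 : LambdaRel k (FreeAlgebra.ι k (0 : Fin 3) ^ 2) 1
  | gx : LambdaRel k (FreeAlgebra.ι k (0 : Fin 3) * FreeAlgebra.ι k (1 : Fin 3))
      (-(FreeAlgebra.ι k (1 : Fin 3) * FreeAlgebra.ι k (0 : Fin 3)))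
  | gy : LambdaRel k (FreeAlgebra.ι k (0 : Fin 3) * FreeAlgebra.ι k (2 : Fin 3))
      (-(FreeAlgebra.ι k (2 : Fin 3) * FreeAlgebra.ι k (0 : Fin 3)))
  | xy : LambdaRel k (FreeAlgebra.ι k (1 : Fin 3) * FreeAlgebra.ι k (2 : Fin 3))
      (FreeAlgebra.ι k (2 : Fin 3) * FreeAlgebra.ι k (1 : Fin 3))

/-- The basic algebra `Λ`. -/
abbrev Lambda (k : Type) [Field k] := RingQuot (LambdaRel k)

end QFL

set_option linter.unusedSimpArgs false
namespace QFL

section skew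
variable {k A : Type*} [Field k] [Ring A] [Algebra k A]

theorem skew_pow_left {x y : A} {c : k} (h : x * y = c • (y * x)) (m : ℕ) :
    x ^ m * y = c ^ m • (y * x ^ m) := by
  induction m with
  | zero => simp
  | succ m ih =>
    rw [pow_succ' x, mul_assoc, ih, mul_smul_comm, ← mul_assoc, h, smul_mul_assoc, smul_smul,
      mul_assoc, ← pow_succ', ← pow_succ]

theorem skew_pow_right {x y : A} {c : k} (h : x * y = c • (y * x)) (m : ℕ) :
    x * y ^ m = c ^ m • (y ^ m * x) := by
  induction m with
  | zero => simp
  | succ m ih =>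
    rw [pow_succ, ← mul_assoc, ih, smul_mul_assoc, mul_assoc, h, mul_smul_comm, smul_smul,
      ← mul_assoc, pow_succ]

theorem skew_mul {x x' y : A} {c c' : k} (h : x * y = c • (y * x)) (h' : x' * y = c' • (y * x')) :
    (x * x') * y = (c * c') • (y * (x * x')) := by
  rw [mul_assoc, h', mul_smul_comm, ← mul_assoc, h, smul_mul_assoc, smul_smul, mul_assoc, mul_comm c]

theorem gauss_succ (p : k) (s : ℕ) : (∑ t ∈ Finset.range (s+1), p ^ t) = 1 + p * ∑ t ∈ Finset.range s, p ^ t := by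
  rw [Finset.sum_range_succ', Finset.mul_sum, add_comm]; simp [pow_succ']

theorem F_E_pow {E F L : A} {p : k} (h : F * E = p • (E * F) + 1 - L) (hL : L * E = p ^ 2 • (E * L))
    (s : ℕ) : F * E ^ (s+1) = p ^ (s+1) • (E ^ (s+1) * F) +
      (∑ t ∈ Finset.range (s+1), p ^ t) • (E ^ s - p ^ s • (E ^ s * L)) := by
  induction s with
  | zero => simp [h]; abel
  | succ s ih =>
    rw [pow_succ E (s+1), ← mul_assoc, ih]
    have e1 : E ^ (s+1) * F * E = p • (E ^ (s+2) * F) + E ^ (s+1) - E ^ (s+1) * L := by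
      rw [mul_assoc, h, mul_sub, mul_add, mul_smul_comm, ← mul_assoc, ← pow_succ, mul_one]
    have e2 : E ^ s * L * E = p ^ 2 • (E ^ (s+1) * L) := by
      rw [mul_assoc, hL, mul_smul_comm, ← mul_assoc, ← pow_succ]
    rw [add_mul, smul_mul_assoc, e1, smul_mul_assoc, sub_mul, smul_mul_assoc, e2, ← pow_succ,
      ← pow_succ]
    have g1 := Finset.sum_range_succ (fun t => p ^ t) (s+1)
    have g2 := gauss_succ p (s+1)
    have g3 : (∑ t ∈ Finset.range (s+1), p ^ t) = (∑ t ∈ Finset.range (s+2), p ^ t) - p ^ (s+1) := by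
      rw [g1]; ring
    have g4 : p ^ (s+1) * (∑ t ∈ Finset.range (s+2), p ^ t) =
       p ^ (s+1) + p ^ (s+2) * (∑ t ∈ Finset.range (s+1), p ^ t) := by
      rw [g2]; ring
    have : (∑ t ∈ Finset.range (s+1+1), p ^ t) • (E ^ (s+1) - p ^ (s+1) • (E ^ (s+1) * L)) =
      (∑ t ∈ Finset.range (s+2), p ^ t) • E ^ (s+1) - (p ^ (s+1) * (∑ t ∈ Finset.range (s+2), p ^ t)) • (E ^ (s+1) * L) := by
      rw [smul_sub, smul_smul]; congr 2; ring
    rw [this, g4, g1]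
    module

/-- `E F^{a+1}` -/
theorem E_F_pow {E F L : A} {p q : k} (hpq : q * p = 1) (h : F * E = p • (E * F) + 1 - L)
    (hL : L * F = q ^ 2 • (F * L))
    (a : ℕ) : E * F ^ (a+1) = q ^ (a+1) • (F ^ (a+1) * E) -
      (q * ∑ t ∈ Finset.range (a+1), q ^ t) • (F ^ a - q ^ a • (F ^ a * L)) := by
  have h0 : E * F = q • (F * E) - q • (1 - L) := by
    rw [h]
    have : q • (p • (E * F) + 1 - L) - q • (1 - L) = (q * p) • (E * F) := by module
    rw [this, hpq, one_smul]
  induction a with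
  | zero => simp [h0]
  | succ a ih =>
    rw [pow_succ F (a+1), ← mul_assoc, ih]
    have e1 : F ^ (a+1) * E * F = q • (F ^ (a+2) * E) - q • F ^ (a+1) + q • (F ^ (a+1) * L) := by
      rw [mul_assoc, h0, mul_sub, mul_smul_comm, mul_smul_comm, ← mul_assoc, ← pow_succ, mul_sub, mul_one]
      module
    have e2 : F ^ a * L * F = q ^ 2 • (F ^ (a+1) * L) := by
      rw [mul_assoc, hL, mul_smul_comm, ← mul_assoc, ← pow_succ]
    rw [sub_mul, smul_mul_assoc, e1, smul_mul_assoc, sub_mul, smul_mul_assoc, e2, ← pow_succ,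
      ← pow_succ]
    have g1 := Finset.sum_range_succ (fun t => q ^ t) (a+1)
    have g2 := gauss_succ q (a+1)
    have g4 : q ^ (a+1) * (q * ∑ t ∈ Finset.range (a+2), q ^ t) =
       q ^ (a+2) + q ^ (a+3) * (∑ t ∈ Finset.range (a+1), q ^ t) := by
      rw [g2]; ring
    have : (q * ∑ t ∈ Finset.range (a+1+1), q ^ t) • (F ^ (a+1) - q ^ (a+1) • (F ^ (a+1) * L)) =
      (q * ∑ t ∈ Finset.range (a+2), q ^ t) • F ^ (a+1) - (q ^ (a+1) * (q * ∑ t ∈ Finset.range (a+2), q ^ t)) • (F ^ (a+1) * L) := by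
      rw [smul_sub, smul_smul]; congr 2; ring
    rw [this, g4, g1]
    module
end skew

/-- In a quotient of a free algebra, a subspace containing `1` and stable under left multiplication
by the generators is everything. -/
theorem span_top {k : Type} [Field k] {ι : Type} {r : FreeAlgebra k ι → FreeAlgebra k ι → Prop}
    {V : Type*} [AddCommGroup V] [Module k V] [Module (RingQuot r) V] [IsScalarTower k (RingQuot r) V]
    (S : Submodule k V)
    (hS : ∀ i, ∀ x ∈ S, RingQuot.mkAlgHom k r (FreeAlgebra.ι k i) • x ∈ S) :
    ∀ (u : RingQuot r), ∀ x ∈ S, u • x ∈ S := by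
  intro u
  obtain ⟨f, rfl⟩ := RingQuot.mkAlgHom_surjective k r u
  induction f using FreeAlgebra.induction with
  | grade0 c =>
    intro x hx
    rw [AlgHom.commutes, algebraMap_smul]; exact S.smul_mem _ hx
  | grade1 i => exact hS i
  | mul a b ha hb => intro x hx; rw [map_mul, mul_smul]; exact ha _ (hb _ hx)
  | add a b ha hb => intro x hx; rw [map_add, add_smul]; exact S.add_mem (ha _ hx) (hb _ hx)

section rels
variable {k : Type} [Field k] {n : ℕ} {q : k}

/-- `L = K⁻¹K̂`. -/
def Lq (k : Type) [Field k] (n : ℕ) (q : k) : U k n q := Kinv k n q * Kh k n q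
/-- `Z = K K̂^(n/2)`. -/
def Zq (k : Type) [Field k] (n : ℕ) (q : k) : U k n q := K k n q * Kh k n q ^ (n / 2)

theorem K_pow : K k n q ^ n = 1 := by
  have := RingQuot.mkAlgHom_rel k (Rel.Kord (k := k) (n := n) (q := q))
  simp only [map_mul, map_pow, map_one, map_zero] at this
  exact this

theorem Kh_pow : Kh k n q ^ n = (K k n q ^ (n-1)) ^ 2 := by
  have := RingQuot.mkAlgHom_rel k (Rel.Khord (k := k) (n := n) (q := q))
  simp only [map_mul, map_pow, map_one, map_zero] at this
  exact this

theorem K_Kh : K k n q * Kh k n q = Kh k n q * K k n q := by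
  have := RingQuot.mkAlgHom_rel k (Rel.KKh (k := k) (n := n) (q := q))
  simp only [map_mul, map_pow, map_one, map_zero] at this
  exact this

theorem Kh_pow' : Kh k n q ^ (n ^ 2) = 1 := by
  rw [pow_two n, pow_mul, Kh_pow, ← pow_mul, ← pow_mul, show (n-1) * (2 * n) = n * ((n-1) * 2) by ring, pow_mul, K_pow, one_pow]

theorem K_inv (hn : 0 < n) : K k n q ^ (n-1) * K k n q = 1 := by
  rw [← pow_succ, Nat.sub_add_cancel hn, K_pow]

theorem Kh_inv (hn : 0 < n) : Kh k n q ^ (n^2-1) * Kh k n q = 1 := by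
  rw [← pow_succ, Nat.sub_add_cancel (Nat.pow_pos hn), Kh_pow']

theorem K_E (hn : 0 < n) : K k n q * E k n q = q ^ n • (E k n q * K k n q) := by
  have := RingQuot.mkAlgHom_rel k (Rel.KE (k := k) (n := n) (q := q))
  simp only [map_mul, map_pow, map_smul] at this
  change K k n q * E k n q * K k n q ^ (n-1) = q ^ n • E k n q at this
  have := congrArg (· * K k n q) this
  simpa only [mul_assoc, K_inv hn, mul_one, smul_mul_assoc] using this

theorem K_F (hn : 0 < n) : K k n q * F k n q = (q ^ n)⁻¹ • (F k n q * K k n q) := by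
  have := RingQuot.mkAlgHom_rel k (Rel.KF (k := k) (n := n) (q := q))
  simp only [map_mul, map_pow, map_smul] at this
  change K k n q * F k n q * K k n q ^ (n-1) = (q ^ n)⁻¹ • F k n q at this
  have := congrArg (· * K k n q) this
  simpa only [mul_assoc, K_inv hn, mul_one, smul_mul_assoc] using this

theorem Kh_E (hn : 0 < n) : Kh k n q * E k n q = (q ^ n * (q ^ 2)⁻¹) • (E k n q * Kh k n q) := by
  have := RingQuot.mkAlgHom_rel k (Rel.KhE (k := k) (n := n) (q := q))
  simp only [map_mul, map_pow, map_smul] at this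
  change Kh k n q * E k n q * Kh k n q ^ (n^2-1) = (q ^ n * (q ^ 2)⁻¹) • E k n q at this
  have := congrArg (· * Kh k n q) this
  simpa only [mul_assoc, Kh_inv hn, mul_one, smul_mul_assoc] using this

theorem Kh_F (hn : 0 < n) : Kh k n q * F k n q = ((q ^ n)⁻¹ * q ^ 2) • (F k n q * Kh k n q) := by
  have := RingQuot.mkAlgHom_rel k (Rel.KhF (k := k) (n := n) (q := q))
  simp only [map_mul, map_pow, map_smul] at this
  change Kh k n q * F k n q * Kh k n q ^ (n^2-1) = ((q ^ n)⁻¹ * q ^ 2) • F k n q at this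
  have := congrArg (· * Kh k n q) this
  simpa only [mul_assoc, Kh_inv hn, mul_one, smul_mul_assoc] using this

theorem E_pow : E k n q ^ (n ^ 2) = 0 := by
  have := RingQuot.mkAlgHom_rel k (Rel.Enil (k := k) (n := n) (q := q))
  simp only [map_mul, map_pow, map_one, map_zero] at this
  exact this

theorem F_pow : F k n q ^ (n ^ 2) = 0 := by
  have := RingQuot.mkAlgHom_rel k (Rel.Fnil (k := k) (n := n) (q := q))
  simp only [map_mul, map_pow, map_one, map_zero] at this
  exact this

theorem E_pow' {s : ℕ} (h : n ^ 2 ≤ s) : E k n q ^ s = 0 := by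
  rw [← Nat.sub_add_cancel h, pow_add, E_pow, mul_zero]

theorem F_pow' {s : ℕ} (h : n ^ 2 ≤ s) : F k n q ^ s = 0 := by
  rw [← Nat.sub_add_cancel h, pow_add, F_pow, mul_zero]

theorem F_E : F k n q * E k n q = q⁻¹ • (E k n q * F k n q) + 1 - Lq k n q := by
  have := RingQuot.mkAlgHom_rel k (Rel.EF (k := k) (n := n) (q := q))
  simp only [map_mul, map_pow, map_smul, map_sub, map_one] at this
  change F k n q * E k n q - q⁻¹ • (E k n q * F k n q) = 1 - Lq k n q at this
  rw [sub_eq_iff_eq_add] at this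
  rw [this]; abel

/-- The standing hypotheses. -/
structure Hyp {k : Type} [Field k] (n : ℕ) (q : k) : Prop where
  hn : 0 < n
  h4 : 4 ∣ n
  hq : IsPrimitiveRoot q (n ^ 2)


theorem Hyp.exm (H : Hyp n q) : ∃ m, n = 4 * (m + 1) := by
  obtain ⟨m, rfl⟩ := H.h4
  have := H.hn
  exact ⟨m - 1, by omega⟩

theorem half_sq (m : ℕ) : (4 * (m + 1)) ^ 2 / 2 = 8 * (m + 1) ^ 2 := by
  rw [show (4 * (m + 1)) ^ 2 = 2 * (8 * (m + 1) ^ 2) by ring]; simp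

theorem half_n (m : ℕ) : (4 * (m + 1)) / 2 = 2 * (m + 1) := by omega

theorem half_d (m : ℕ) : ((4 * (m + 1)) ^ 2 - 4 * (m + 1)) / 2 = 8 * m ^ 2 + 14 * m + 6 := by
  rw [show (4 * (m + 1)) ^ 2 = 2 * (8 * m ^ 2 + 14 * m + 6) + 4 * (m + 1) by ring]; simp

theorem Hyp.q0 (H : Hyp n q) : q ≠ 0 := H.hq.ne_zero (Nat.pow_pos H.hn).ne'
theorem Hyp.qN (H : Hyp n q) : q ^ (n ^ 2) = 1 := H.hq.pow_eq_one
theorem Hyp.N16 (H : Hyp n q) : 16 ≤ n ^ 2 := by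
  obtain ⟨m, rfl⟩ := H.exm
  rw [show (4 * (m+1)) ^ 2 = 16 * m ^ 2 + 32 * m + 16 by ring]; omega
theorem Hyp.Neven (H : Hyp n q) : 2 * (n ^ 2 / 2) = n ^ 2 := by
  obtain ⟨m, rfl⟩ := H.exm
  rw [half_sq]; ring

theorem Hyp.q_half (H : Hyp n q) : q ^ (n ^ 2 / 2) = -1 := by
  have h2 : (q ^ (n ^ 2 / 2)) ^ 2 = 1 := by
    rw [← pow_mul, ← H.qN, mul_comm, H.Neven]
  rcases sq_eq_one_iff.1 h2 with h | h
  · have := Nat.le_of_dvd (by have := H.N16; omega) (H.hq.dvd_of_pow_eq_one _ h)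
    have := H.N16
    omega
  · exact h

theorem K_powmul (a : ℕ) : K k n q ^ (n * a) = 1 := by rw [pow_mul, K_pow, one_pow]

theorem KKh_comm : Commute (K k n q) (Kh k n q) := K_Kh

theorem KKh_exp (a b c d : ℕ) : K k n q ^ a * Kh k n q ^ b * (K k n q ^ c * Kh k n q ^ d) =
    K k n q ^ (a + c) * Kh k n q ^ (b + d) := by
  rw [pow_add, pow_add, mul_assoc, ← mul_assoc (Kh k n q ^ b), (KKh_comm.pow_pow c b).eq.symm]
  simp only [mul_assoc]

theorem KKh_pow (a b c : ℕ) : (K k n q ^ a * Kh k n q ^ b) ^ c =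
    K k n q ^ (a * c) * Kh k n q ^ (b * c) := by
  rw [(KKh_comm.pow_pow a b).mul_pow, pow_mul, pow_mul]

theorem Lq_eq : Lq k n q = K k n q ^ (n-1) * Kh k n q ^ 1 := by simp [Lq, Kinv]
theorem Zq_eq : Zq k n q = K k n q ^ 1 * Kh k n q ^ (n/2) := by simp [Zq]

theorem Kh_half (H : Hyp n q) (a : ℕ) : Kh k n q ^ ((n ^ 2 / 2) * a) = 1 := by
  rw [pow_mul]
  have : Kh k n q ^ (n ^ 2 / 2) = 1 := by
    have e : n ^ 2 / 2 = n * (n / 2) := by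
      obtain ⟨m, rfl⟩ := H.exm
      rw [half_sq, half_n]; ring
    rw [e, pow_mul, Kh_pow, ← pow_mul, ← pow_mul]
    have e2 : (n-1) * (2 * (n/2)) = n * (n-1) := by
      obtain ⟨m, rfl⟩ := H.exm
      rw [half_n]; ring
    rw [e2, K_powmul]
  rw [this, one_pow]

theorem L_half (H : Hyp n q) : Lq k n q ^ (n ^ 2 / 2) = 1 := by
  rw [Lq_eq, KKh_pow]
  have := Kh_half H 1
  rw [mul_one] at this
  rw [one_mul, this, mul_one]
  have e : (n - 1) * (n ^ 2 / 2) = n * ((n-1) * (n / 2)) := by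
    obtain ⟨m, rfl⟩ := H.exm
    rw [half_sq, half_n]; ring
  rw [e, K_powmul]

theorem Z_sq (H : Hyp n q) : Zq k n q ^ 2 = 1 := by
  rw [Zq_eq, KKh_pow]
  have e : n / 2 * 2 = n := by
    obtain ⟨m, rfl⟩ := H.exm
    rw [half_n]; ring
  rw [e, Kh_pow, ← pow_mul, ← pow_add]
  have e : 1 * 2 + (n-1) * 2 = n * 2 := by
    obtain ⟨m, rfl⟩ := H.exm
    omega
  rw [e, K_powmul]

theorem LZ_comm : Commute (Lq k n q) (Zq k n q) := by
  rw [Lq_eq, Zq_eq]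
  change _ * _ = _ * _
  rw [KKh_exp, KKh_exp, add_comm, add_comm 1 (n/2)]

theorem K_eq (H : Hyp n q) : K k n q = (Zq k n q * Lq k n q ^ ((n^2-n)/2)) ^ (1 + n/2) := by
  rw [Zq_eq, Lq_eq, KKh_pow, KKh_exp, KKh_pow]
  have e1 : (n / 2 + 1 * ((n ^ 2 - n) / 2)) * (1 + n / 2) = n ^ 2 / 2 * (1 + n/2) := by
    obtain ⟨m, rfl⟩ := H.exm
    rw [half_d, half_sq, half_n]; ring
  have e2 : ∃ B, (1 + (n - 1) * ((n ^ 2 - n) / 2)) * (1 + n / 2) = n * B + 1 := by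
    obtain ⟨m, rfl⟩ := H.exm
    rw [half_d, half_n]
    have : 4 * (m+1) - 1 = 4 * m + 3 := by omega
    rw [this]
    refine ⟨2 + m + (8 * m ^ 2 + 12 * m + 4) * (2 * m + 3), ?_⟩
    ring
  obtain ⟨B, hB⟩ := e2
  rw [e1, Kh_half H, hB, pow_add, K_powmul, pow_one, one_mul, mul_one]

theorem Kh_eq (H : Hyp n q) : Kh k n q = K k n q * Lq k n q := by
  rw [Lq_eq, ← mul_assoc, ← pow_succ', Nat.sub_add_cancel H.hn, K_pow, one_mul, pow_one]

theorem L_E (H : Hyp n q) : Lq k n q * E k n q = (q⁻¹) ^ 2 • (E k n q * Lq k n q) := by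
  have h := skew_mul (skew_pow_left (K_E (k := k) (q := q) H.hn) (n-1)) (Kh_E H.hn)
  have e : (q ^ n) ^ (n-1) * (q ^ n * (q ^ 2)⁻¹) = (q⁻¹) ^ 2 := by
    rw [← mul_assoc, ← pow_succ, Nat.sub_add_cancel H.hn, ← pow_mul, ← pow_two, H.qN, one_mul, inv_pow]
  rw [e] at h; exact h

theorem L_F (H : Hyp n q) : Lq k n q * F k n q = q ^ 2 • (F k n q * Lq k n q) := by
  have h := skew_mul (skew_pow_left (K_F (k := k) (q := q) H.hn) (n-1)) (Kh_F H.hn)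
  have e : ((q ^ n)⁻¹) ^ (n-1) * ((q ^ n)⁻¹ * q ^ 2) = q ^ 2 := by
    rw [← mul_assoc, ← pow_succ, Nat.sub_add_cancel H.hn, inv_pow, ← pow_mul, ← pow_two, H.qN, inv_one, one_mul]
  rw [e] at h; exact h

theorem Z_aux (H : Hyp n q) : q ^ n * (q ^ n * (q ^ 2)⁻¹) ^ (n/2) = -1 := by
  have h0 := H.q0
  rw [mul_pow, ← pow_mul, inv_pow, ← pow_mul]
  have e : n * (n/2) = n ^ 2 / 2 := by
    obtain ⟨m, rfl⟩ := H.exm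
    rw [half_sq, half_n]; ring
  have e2 : 2 * (n/2) = n := by
    obtain ⟨m, rfl⟩ := H.exm
    rw [half_n]; ring
  rw [e, e2, H.q_half]; field_simp

theorem Z_E (H : Hyp n q) : Zq k n q * E k n q = (-1 : k) • (E k n q * Zq k n q) := by
  have h := skew_mul (K_E (k := k) (q := q) H.hn) (skew_pow_left (Kh_E H.hn) (n/2))
  rw [Z_aux H] at h; exact h

theorem Z_F (H : Hyp n q) : Zq k n q * F k n q = (-1 : k) • (F k n q * Zq k n q) := by
  have h := skew_mul (K_F (k := k) (q := q) H.hn) (skew_pow_left (Kh_F H.hn) (n/2))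
  have e : (q ^ n)⁻¹ * ((q ^ n)⁻¹ * q ^ 2) ^ (n/2) = -1 := by
    have := congrArg (·⁻¹) (Z_aux H)
    simp only [mul_inv, ← inv_pow, inv_inv] at this
    rw [inv_neg, inv_one] at this
    simpa using this
  rw [e] at h; exact h

end rels
end QFL
namespace QFL
section W
variable {k : Type} [Field k]

/-- model space -/
abbrev W (k : Type) [Field k] (N : ℕ) := Fin N × Fin N → k

/-- basis vectors, zero outside the range -/
def w (k : Type) [Field k] (N : ℕ) (a b : ℕ) : W k N :=
  if h : a < N ∧ b < N then Pi.single (⟨a, h.1⟩, ⟨b, h.2⟩) 1 else 0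

theorem w_zero {N a b : ℕ} (h : N ≤ a ∨ N ≤ b) : w k N a b = 0 := by
  rw [w, dif_neg]; omega

variable {V : Type*} [AddCommGroup V] [Module k V]

/-- linear map given by the images of basis vectors -/
def mkW (N : ℕ) (f : ℕ → ℕ → V) : W k N →ₗ[k] V :=
  (Pi.basisFun k (Fin N × Fin N)).constr k (fun x => f x.1 x.2)

theorem mkW_w {N : ℕ} {f : ℕ → ℕ → V} (hf : ∀ a b, (N ≤ a ∨ N ≤ b) → f a b = 0) (a b : ℕ) :
    mkW N f (w k N a b) = f a b := by
  by_cases h : a < N ∧ b < N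
  · rw [w, dif_pos h]
    have := (Pi.basisFun k (Fin N × Fin N)).constr_basis k (fun x => f x.1 x.2) (⟨a, h.1⟩, ⟨b, h.2⟩)
    rw [Pi.basisFun_apply] at this
    exact this
  · rw [hf a b (by omega), w_zero (by omega), map_zero]

theorem W_ext {N : ℕ} {f g : W k N →ₗ[k] V} (h : ∀ a b, a < N → b < N → f (w k N a b) = g (w k N a b)) :
    f = g := by
  apply (Pi.basisFun k (Fin N × Fin N)).ext
  rintro ⟨⟨a, ha⟩, ⟨b, hb⟩⟩
  have := h a b ha hb
  rw [w, dif_pos ⟨ha, hb⟩] at this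
  rw [Pi.basisFun_apply]; exact this

/-- character data -/
structure Chr {k : Type} [Field k] (n : ℕ) (q : k) where
  lam : k
  kap : k
  hk : kap ^ n = 1
  hkl : (kap * lam) ^ n = (kap ^ (n-1)) ^ 2

variable {n : ℕ} {q : k} (H : Hyp n q) (χ : Chr n q)

def cK (χ : Chr n q) (a b : ℕ) : k := χ.kap * (q ^ n) ^ b * ((q ^ n)⁻¹) ^ a
def cKh (χ : Chr n q) (a b : ℕ) : k := χ.kap * χ.lam * (q ^ n * (q ^ 2)⁻¹) ^ b * ((q ^ n)⁻¹ * q ^ 2) ^ a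
def gq (q : k) (a : ℕ) : k := ∑ t ∈ Finset.range a, q ^ t
def cE (χ : Chr n q) (a b : ℕ) : k := -(q * gq q a) + gq q a * q ^ a * χ.lam * ((q⁻¹) ^ 2) ^ b

def opK (χ : Chr n q) : Module.End k (W k (n^2)) := mkW (n^2) fun a b => cK χ a b • w k (n^2) a b
def opKh (χ : Chr n q) : Module.End k (W k (n^2)) := mkW (n^2) fun a b => cKh χ a b • w k (n^2) a b
def opF (_χ : Chr n q) : Module.End k (W k (n^2)) := mkW (n^2) fun a b => w k (n^2) (a+1) b
def opE (χ : Chr n q) : Module.End k (W k (n^2)) := mkW (n^2) fun a b =>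
  q ^ a • w k (n^2) a (b+1) + cE χ a b • w k (n^2) (a-1) b

theorem gq_N (H : Hyp n q) : gq q (n ^ 2) = 0 := by
  have h1 : q ≠ 1 := H.hq.ne_one (by have := H.N16; omega)
  have := geom_sum_mul q (n^2)
  rw [H.qN, sub_self] at this
  exact (mul_eq_zero.1 this).resolve_right (sub_ne_zero.2 h1)

theorem opK_w (a b : ℕ) : opK χ (w k (n^2) a b) = cK χ a b • w k (n^2) a b :=
  mkW_w (fun a b h => by rw [w_zero h, smul_zero]) a b
theorem opKh_w (a b : ℕ) : opKh χ (w k (n^2) a b) = cKh χ a b • w k (n^2) a b :=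
  mkW_w (fun a b h => by rw [w_zero h, smul_zero]) a b
theorem opF_w (a b : ℕ) : opF χ (w k (n^2) a b) = w k (n^2) (a+1) b :=
  mkW_w (fun a b h => by rw [w_zero (by omega)]) a b
theorem opE_w (H : Hyp n q) (a b : ℕ) : opE χ (w k (n^2) a b) =
    q ^ a • w k (n^2) a (b+1) + cE χ a b • w k (n^2) (a-1) b := by
  refine mkW_w (fun a b h => ?_) a b
  rw [w_zero (b := b+1) (by omega), smul_zero, zero_add]
  by_cases h2 : a = n ^ 2
  · subst h2; simp [cE, gq_N H]
  · rw [w_zero (by omega), smul_zero]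

theorem pow_w {f : Module.End k (W k (n^2))} {x : W k (n^2)} {c : k} (h : f x = c • x) (m : ℕ) :
    (f ^ m) x = c ^ m • x := by
  induction m with
  | zero => simp
  | succ m ih => rw [pow_succ' f, Module.End.mul_apply, ih, map_smul, h, smul_smul, pow_succ c]

theorem opF_pow (m a b : ℕ) : (opF χ ^ m) (w k (n^2) a b) = w k (n^2) (a+m) b := by
  induction m with
  | zero => simp
  | succ m ih => rw [pow_succ' (opF χ), Module.End.mul_apply, ih, opF_w]; congr 1

theorem cK_n (H : Hyp n q) (a b : ℕ) : cK χ a b ^ n = 1 := by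
  have h : (q ^ n) ^ n = 1 := by rw [← pow_mul, ← pow_two, H.qN]
  rw [cK, mul_pow, mul_pow, χ.hk, pow_right_comm _ b n, pow_right_comm _ a n, inv_pow, h]
  simp

theorem cK_inv (H : Hyp n q) (a b : ℕ) : cK χ a b ^ (n-1) = (cK χ a b)⁻¹ := by
  apply eq_inv_of_mul_eq_one_left
  rw [← pow_succ, Nat.sub_add_cancel H.hn, cK_n χ H]

theorem cKh_n (H : Hyp n q) (a b : ℕ) : cKh χ a b ^ n = (cK χ a b ^ (n-1)) ^ 2 := by
  have h0 := H.q0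
  have hk0 : χ.kap ≠ 0 := by
    intro h; have := χ.hk; rw [h, zero_pow H.hn.ne'] at this; exact zero_ne_one this
  have hki : χ.kap ^ (n-1) = (χ.kap)⁻¹ := by
    apply eq_inv_of_mul_eq_one_left
    rw [← pow_succ, Nat.sub_add_cancel H.hn, χ.hk]
  have h : (q ^ n) ^ n = 1 := by rw [← pow_mul, ← pow_two, H.qN]
  rw [cK_inv χ H, cKh, mul_pow, mul_pow, χ.hkl, hki, pow_right_comm _ b n, pow_right_comm _ a n,
    mul_pow (q^n), mul_pow (q^n)⁻¹, inv_pow (q^n) n, h, cK, inv_pow (q^2) n, pow_right_comm q 2 n]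
  simp only [one_mul, inv_one, inv_pow, mul_inv, mul_pow, inv_inv]
  ring

theorem cKh_N (H : Hyp n q) (a b : ℕ) : cKh χ a b ^ (n^2) = 1 := by
  rw [pow_two n, pow_mul, cKh_n χ H, ← pow_mul, ← pow_mul, show (n-1) * (2 * n) = n * ((n-1) * 2) by ring, pow_mul, cK_n χ H, one_pow]

theorem cKh_inv (H : Hyp n q) (a b : ℕ) : cKh χ a b ^ (n^2-1) = (cKh χ a b)⁻¹ := by
  apply eq_inv_of_mul_eq_one_left
  rw [← pow_succ, Nat.sub_add_cancel (Nat.pow_pos H.hn), cKh_N χ H]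

theorem cK_ne (H : Hyp n q) (a b : ℕ) : cK χ a b ≠ 0 := by
  intro h; have := cK_n χ H a b; rw [h, zero_pow H.hn.ne'] at this; exact zero_ne_one this
theorem cKh_ne (H : Hyp n q) (a b : ℕ) : cKh χ a b ≠ 0 := by
  intro h; have := cKh_N χ H a b; rw [h, zero_pow (Nat.pow_pos H.hn).ne'] at this; exact zero_ne_one this

theorem cK_b (a b : ℕ) : cK χ a (b+1) = q ^ n * cK χ a b := by rw [cK, cK]; ring
theorem cK_a (a b : ℕ) : cK χ (a+1) b = (q ^ n)⁻¹ * cK χ a b := by rw [cK, cK]; ring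
theorem cKh_b (a b : ℕ) : cKh χ a (b+1) = (q ^ n * (q ^ 2)⁻¹) * cKh χ a b := by rw [cKh, cKh]; ring
theorem cKh_a (a b : ℕ) : cKh χ (a+1) b = ((q ^ n)⁻¹ * q ^ 2) * cKh χ a b := by rw [cKh, cKh]; ring

theorem cE_zero (b : ℕ) : cE χ 0 b = 0 := by simp [cE, gq]

/-- weight operator applied to `E w` -/
theorem diagE (H : Hyp n q) {c : ℕ → ℕ → k} {f : Module.End k (W k (n^2))} {d : k}
    (hf : ∀ a b, f (w k (n^2) a b) = c a b • w k (n^2) a b) (hb : ∀ a b, c a (b+1) = d * c a b)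
    (ha : ∀ a b, c a b = d * c (a+1) b) (a b : ℕ) :
    f (opE χ (w k (n^2) a b)) = (d * c a b) • opE χ (w k (n^2) a b) := by
  rw [opE_w χ H, map_add, map_smul, map_smul, hf, hf, hb]
  cases a with
  | zero => simp [cE_zero, smul_smul]
  | succ a =>
    rw [Nat.add_sub_cancel, ha a b]; module

theorem opL_w (H : Hyp n q) (a b : ℕ) : (opK χ ^ (n-1) * opKh χ) (w k (n^2) a b) =
    (χ.lam * (q ^ 2) ^ a * ((q⁻¹) ^ 2) ^ b) • w k (n^2) a b := by
  have hk := cK_ne χ H a b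
  have h0 := H.q0
  rw [Module.End.mul_apply, opKh_w, map_smul, pow_w (opK_w χ a b), cK_inv χ H, smul_smul]
  congr 1
  have e : cKh χ a b = cK χ a b * (χ.lam * (q ^ 2) ^ a * ((q⁻¹) ^ 2) ^ b) := by
    rw [cKh, cK, mul_pow, mul_pow, inv_pow q 2]; ring
  rw [e]; field_simp

theorem rel_FE (H : Hyp n q) : opF χ * opE χ = q⁻¹ • (opE χ * opF χ) + 1 - opK χ ^ (n-1) * opKh χ := by
  apply W_ext
  intro a b _ _
  have h0 := H.q0
  rw [LinearMap.sub_apply, LinearMap.add_apply, LinearMap.smul_apply, Module.End.mul_apply,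
    Module.End.mul_apply, Module.End.one_apply, opL_w χ H, opE_w χ H, opF_w, opE_w χ H, map_add, map_smul, map_smul,
    opF_w, opF_w, Nat.add_sub_cancel]
  have e1 : cE χ a b • w k (n^2) (a-1+1) b = cE χ a b • w k (n^2) a b := by
    cases a with
    | zero => simp [cE_zero]
    | succ a => rfl
  rw [e1]
  have e2 : cE χ a b = q⁻¹ * cE χ (a+1) b + 1 - χ.lam * (q ^ 2) ^ a * ((q⁻¹) ^ 2) ^ b := by
    have g1 : gq q (a+1) = gq q a + q ^ a := Finset.sum_range_succ _ _
    have g2 : gq q (a+1) = 1 + q * gq q a := gauss_succ q a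
    have g3 : gq q (a+1) * q ^ a = q ^ a * (q * gq q a) + q ^ a := by rw [g2]; ring
    have : cE χ (a+1) b = q * (-(gq q (a+1)) + gq q (a+1) * q ^ a * χ.lam * ((q⁻¹) ^ 2) ^ b) := by
      rw [cE]; ring
    rw [this, ← mul_assoc, inv_mul_cancel₀ h0, one_mul]
    have g4 : gq q (a+1) * q ^ a = gq q a * q ^ a + (q^2) ^ a := by rw [g1]; ring
    rw [g4, g2, cE]
    ring
  have e3 : q ^ a = q⁻¹ * q ^ (a+1) := by rw [pow_succ']; field_simp
  rw [e2, e3]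
  module

theorem rel_LE (H : Hyp n q) : (opK χ ^ (n-1) * opKh χ) * opE χ =
    (q⁻¹) ^ 2 • (opE χ * (opK χ ^ (n-1) * opKh χ)) := by
  have h0 := H.q0
  apply W_ext
  intro a b _ _
  rw [Module.End.mul_apply, diagE χ H (opL_w χ H) (d := (q⁻¹)^2) (by intros; ring) (by intros; rw [pow_succ (q^2)]; field_simp),
    LinearMap.smul_apply, Module.End.mul_apply, opL_w χ H, map_smul, smul_smul]

theorem opE_0 (H : Hyp n q) (m b : ℕ) : (opE χ ^ m) (w k (n^2) 0 b) = w k (n^2) 0 (b+m) := by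
  induction m with
  | zero => simp
  | succ m ih => rw [pow_succ' (opE χ), Module.End.mul_apply, ih, opE_w χ H, cE_zero]; simp [add_assoc]

theorem opE_nil (H : Hyp n q) : opE χ ^ (n^2) = 0 := by
  have hN := H.N16
  have h := F_E_pow (rel_FE χ H) (rel_LE χ H) (n^2-1)
  rw [Nat.sub_add_cancel (by omega)] at h
  have hp : IsPrimitiveRoot q⁻¹ (n^2) := H.hq.inv
  have hg := gq_N (q := q⁻¹) ⟨H.hn, H.h4, hp⟩
  rw [gq] at hg
  rw [hg, zero_smul, add_zero, hp.pow_eq_one, one_smul] at h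
  have h2 : ∀ a b, (opE χ ^ (n^2)) (w k (n^2) a b) = 0 := by
    intro a b
    induction a with
    | zero => rw [opE_0 χ H, w_zero (by omega)]
    | succ a ih =>
      rw [← opF_w χ, ← Module.End.mul_apply, ← h, Module.End.mul_apply, ih, map_zero]
  exact W_ext (fun a b _ _ => by rw [h2, LinearMap.zero_apply])

/-- The representation of `U` on `W`. -/
def rep (H : Hyp n q) (χ : Chr n q) : U k n q →ₐ[k] Module.End k (W k (n^2)) :=
  RingQuot.liftAlgHom k ⟨FreeAlgebra.lift k ![opK χ, opKh χ, opE χ, opF χ], by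
    intro x y h
    have h0 := H.q0
    cases h with
    | Kord =>
      simp only [map_pow, FreeAlgebra.lift_ι_apply, map_one]
      apply W_ext; intro a b _ _
      simp [pow_w (opK_w χ a b), cK_n χ H]
    | Khord =>
      simp only [map_pow, FreeAlgebra.lift_ι_apply]
      apply W_ext; intro a b _ _
      simp [pow_w (opKh_w χ a b), pow_w (pow_w (opK_w χ a b) _), cKh_n χ H]
    | KKh =>
      simp only [map_mul, FreeAlgebra.lift_ι_apply]
      apply W_ext; intro a b _ _
      simp [opK_w χ a b, opKh_w χ a b, smul_smul, mul_comm]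
    | KE =>
      simp only [map_mul, map_pow, map_smul, FreeAlgebra.lift_ι_apply]
      apply W_ext; intro a b _ _
      have hk := cK_ne χ H a b
      simp [pow_w (opK_w χ a b), diagE χ H (opK_w χ) (cK_b χ) (fun a b => by rw [cK_a]; field_simp), cK_inv χ H, smul_smul]
      congr 1; field_simp
    | KF =>
      simp only [map_mul, map_pow, map_smul, FreeAlgebra.lift_ι_apply]
      apply W_ext; intro a b _ _
      have hk := cK_ne χ H a b
      simp [pow_w (opK_w χ a b), opF_w, opK_w, cK_a, cK_inv χ H, smul_smul]
      congr 1; field_simp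
    | KhE =>
      simp only [map_mul, map_pow, map_smul, FreeAlgebra.lift_ι_apply]
      apply W_ext; intro a b _ _
      have hk := cKh_ne χ H a b
      simp [pow_w (opKh_w χ a b), diagE χ H (opKh_w χ) (cKh_b χ) (fun a b => by rw [cKh_a]; field_simp), cKh_inv χ H, smul_smul]
      congr 1; field_simp
    | KhF =>
      simp only [map_mul, map_pow, map_smul, FreeAlgebra.lift_ι_apply]
      apply W_ext; intro a b _ _
      have hk := cKh_ne χ H a b
      simp [pow_w (opKh_w χ a b), opF_w, opKh_w, cKh_a, cKh_inv χ H, smul_smul]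
      congr 1; field_simp
    | Enil =>
      simp only [map_pow, FreeAlgebra.lift_ι_apply, map_zero]
      exact opE_nil χ H
    | Fnil =>
      simp only [map_pow, FreeAlgebra.lift_ι_apply, map_zero]
      apply W_ext; intro a b _ _
      change (opF χ ^ (n^2)) _ = _
      rw [opF_pow, w_zero (by omega)]; rfl
    | EF =>
      simp only [map_mul, map_pow, map_smul, map_sub, map_one, FreeAlgebra.lift_ι_apply]
      change opF χ * opE χ - q⁻¹ • (opE χ * opF χ) = 1 - opK χ ^ (n-1) * opKh χ
      rw [rel_FE χ H]; abel⟩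

theorem rep_K (H : Hyp n q) : rep H χ (K k n q) = opK χ := by simp [rep, K]
theorem rep_Kh (H : Hyp n q) : rep H χ (Kh k n q) = opKh χ := by simp [rep, Kh]
theorem rep_E (H : Hyp n q) : rep H χ (E k n q) = opE χ := by simp [rep, E]
theorem rep_F (H : Hyp n q) : rep H χ (F k n q) = opF χ := by simp [rep, F]

end W
end QFL
namespace QFL
section P3
variable {k : Type} [Field k] {n : ℕ} {q : k}

/-- sign -/
def sg (k : Type) [Field k] (j : ℕ) : k := if j = 0 then 1 else -1

theorem sg_sq (j : ℕ) : sg k j ^ 2 = 1 := by unfold sg; split_ifs <;> simp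

theorem intertwine {k : Type} [Field k] {ι : Type} {r : FreeAlgebra k ι → FreeAlgebra k ι → Prop}
    {V V' : Type*} [AddCommGroup V] [Module k V] [AddCommGroup V'] [Module k V']
    (ρ : RingQuot r →ₐ[k] Module.End k V) (ρ' : RingQuot r →ₐ[k] Module.End k V') (f : V →ₗ[k] V')
    (h : ∀ i x, f (ρ (RingQuot.mkAlgHom k r (FreeAlgebra.ι k i)) x) =
      ρ' (RingQuot.mkAlgHom k r (FreeAlgebra.ι k i)) (f x)) (u : RingQuot r) :
    ∀ x, f (ρ u x) = ρ' u (f x) := by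
  obtain ⟨g, rfl⟩ := RingQuot.mkAlgHom_surjective k r u
  induction g using FreeAlgebra.induction with
  | grade0 c =>
    intro x
    rw [AlgHom.commutes, AlgHom.commutes, AlgHom.commutes]; simp
  | grade1 i => exact h i
  | mul a b ha hb => intro x; rw [map_mul, map_mul, map_mul, Module.End.mul_apply, ha, hb]; rfl
  | add a b ha hb => intro x; simp only [map_add, LinearMap.add_apply, ha, hb]

theorem lam_pow (H : Hyp n q) (i j : ℕ) : (sg k j * (q ^ (2 * i)) ^ ((n^2-n)/2)) ^ n = 1 := by
  rw [mul_pow]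
  have e1 : sg k j ^ n = 1 := by
    obtain ⟨m, rfl⟩ := H.exm
    rw [show 4 * (m+1) = 2 * (2 * (m+1)) by ring, pow_mul, sg_sq, one_pow]
  have e2 : 2 * i * ((n^2-n)/2 * n) = n^2 * (i * (n-1)) := by
    obtain ⟨m, rfl⟩ := H.exm
    rw [half_d, show 4 * (m+1) - 1 = 4 * m + 3 by omega]; ring
  rw [e1, ← pow_mul, ← pow_mul, e2, pow_mul, H.qN, one_pow, mul_one]

/-- the character of `e_{2i,j}` -/
def chr (H : Hyp n q) (i j : ℕ) : Chr n q where
  lam := q ^ (2 * i)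
  kap := (sg k j * (q ^ (2 * i)) ^ ((n^2-n)/2)) ^ (1 + n/2)
  hk := by rw [pow_right_comm, lam_pow H, one_pow]
  hkl := by
    have h1 : ((sg k j * (q ^ (2 * i)) ^ ((n^2-n)/2)) ^ (1 + n/2)) ^ n = 1 := by
      rw [pow_right_comm, lam_pow H, one_pow]
    set c := (sg k j * (q ^ (2 * i)) ^ ((n^2-n)/2)) ^ (1 + n/2) with hc
    have hc0 : c ≠ 0 := by
      intro h; rw [h, zero_pow H.hn.ne'] at h1; exact zero_ne_one h1
    have hi : c ^ (n-1) = c⁻¹ := by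
      apply eq_inv_of_mul_eq_one_left
      rw [← pow_succ, Nat.sub_add_cancel H.hn, h1]
    rw [mul_pow, h1, one_mul, hi, inv_pow]
    apply eq_inv_of_mul_eq_one_left
    have e0 : (q ^ (2 * i)) ^ n * c ^ 2 = (sg k j ^ 2) ^ (1 + n/2) * q ^ (2 * i * n + 2 * i * ((n ^ 2 - n) / 2) * (2 * (1 + n / 2))) := by
      rw [hc]; simp only [mul_pow, ← pow_mul, pow_add]; ring
    rw [e0, sg_sq, one_pow, one_mul]
    have e : 2 * i * n + 2 * i * ((n ^ 2 - n) / 2) * (2 * (1 + n / 2)) = n ^ 2 * (2 * i + i * (n-1)) := by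
      obtain ⟨m, rfl⟩ := H.exm
      rw [half_d, half_n, show 4 * (m+1) - 1 = 4 * m + 3 by omega]; ring
    rw [e, pow_mul, H.qN, one_pow]

theorem phi_eq (i : ℕ) : phi k n q i = ((n ^ 2 : k)⁻¹ * 2) • ∑ t ∈ Finset.range (n ^ 2 / 2),
    (((q⁻¹) ^ (2 * i)) • Lq k n q) ^ t := by
  rw [phi]; congr 1; apply Finset.sum_congr rfl; intro t _
  rw [smul_pow, ← pow_mul]; rfl

theorem L_phi (H : Hyp n q) (i : ℕ) : Lq k n q * phi k n q i = q ^ (2 * i) • phi k n q i := by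
  have h0 := H.q0
  have h1 := mul_geom_sum (((q⁻¹) ^ (2 * i)) • Lq k n q) (n^2/2)
  have h2 : (((q⁻¹) ^ (2 * i)) • Lq k n q) ^ (n^2/2) = 1 := by
    rw [smul_pow, L_half H, ← pow_mul, inv_pow, show 2 * i * (n^2/2) = (2 * (n^2/2)) * i by ring,
      H.Neven, pow_mul, H.qN]; simp
  rw [h2, sub_self, sub_mul, one_mul, sub_eq_zero, smul_mul_assoc, inv_pow, inv_smul_eq_iff₀ (by positivity)] at h1
  rw [phi_eq, mul_smul_comm, inv_pow, h1, smul_comm]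

theorem Z_one (H : Hyp n q) (j : ℕ) : Zq k n q * oneJ k n q j = sg k j • oneJ k n q j := by
  have hz := Z_sq (k := k) H
  change _ * (if j = 0 then (2 : k)⁻¹ • (1 + Zq k n q) else (2 : k)⁻¹ • (1 - Zq k n q)) =
    _ • (if j = 0 then (2 : k)⁻¹ • (1 + Zq k n q) else (2 : k)⁻¹ • (1 - Zq k n q))
  unfold sg
  split_ifs
  · rw [one_smul, mul_smul_comm, mul_add, ← pow_two, hz, mul_one, add_comm]
  · rw [mul_smul_comm, mul_sub, ← pow_two, hz, mul_one]; module

theorem Z_phi (i : ℕ) : Commute (Zq k n q) (phi k n q i) := by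
  rw [phi_eq]
  apply Commute.smul_right
  apply Commute.sum_right
  intro t _
  exact (Commute.smul_right LZ_comm.symm _).pow_right _

theorem L_e (H : Hyp n q) (i j : ℕ) : Lq k n q * eIdem k n q i j = q ^ (2 * i) • eIdem k n q i j := by
  rw [eIdem, ← mul_assoc, L_phi H, smul_mul_assoc]
theorem Z_e (H : Hyp n q) (i j : ℕ) : Zq k n q * eIdem k n q i j = sg k j • eIdem k n q i j := by
  rw [eIdem, ← mul_assoc, (Z_phi i).eq, mul_assoc, Z_one H, mul_smul_comm]

theorem pow_e {A : Type*} [Ring A] [Algebra k A] {x e : A} {c : k} (h : x * e = c • e) (m : ℕ) :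
    x ^ m * e = c ^ m • e := by
  induction m with
  | zero => simp
  | succ m ih => rw [pow_succ, mul_assoc, h, mul_smul_comm, ih, smul_smul, pow_succ']
theorem mul_e {A : Type*} [Ring A] [Algebra k A] {x y e : A} {c d : k} (h : x * e = c • e) (h' : y * e = d • e) :
    (x * y) * e = (c * d) • e := by
  rw [mul_assoc, h', mul_smul_comm, h, smul_smul, mul_comm]

theorem K_e (H : Hyp n q) (i j : ℕ) : K k n q * eIdem k n q i j = (chr H i j).kap • eIdem k n q i j := by
  conv_lhs => rw [K_eq H]
  exact pow_e (mul_e (Z_e H i j) (pow_e (L_e H i j) _)) _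
theorem Kh_e (H : Hyp n q) (i j : ℕ) : Kh k n q * eIdem k n q i j =
    ((chr H i j).kap * (chr H i j).lam) • eIdem k n q i j := by
  rw [Kh_eq H]
  exact mul_e (K_e H i j) (L_e H i j)

/-- weights of monomials -/
theorem wt_mon {A : Type*} [Ring A] [Algebra k A] {x E F e : A} {c d μ : k} (hE : x * E = c • (E * x)) (hF : x * F = d • (F * x))
    (he : x * e = μ • e) (a b : ℕ) : x * (F ^ a * E ^ b * e) = (μ * c ^ b * d ^ a) • (F ^ a * E ^ b * e) := by
  rw [← mul_assoc, ← mul_assoc, skew_pow_right hF, smul_mul_assoc, mul_assoc _ x, skew_pow_right hE,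
    mul_smul_comm, ← mul_assoc, smul_mul_assoc, smul_mul_assoc, mul_assoc _ x, he, mul_smul_comm, smul_smul, smul_smul]
  congr 1; ring

theorem sum_phi [CharZero k] (H : Hyp n q) : ∑ i ∈ Finset.range (n^2/2), phi k n q i = 1 := by
  have hN := H.N16
  simp only [phi, ← Finset.smul_sum]
  rw [Finset.sum_comm, Finset.sum_eq_single_of_mem 0 (Finset.mem_range.2 (by omega))]
  · simp only [mul_zero, pow_zero, one_smul, Finset.sum_const, Finset.card_range]
    rw [← Nat.cast_smul_eq_nsmul k, smul_smul]
    have : ((n^2/2 : ℕ) : k) * 2 = (n:k)^2 := by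
      exact_mod_cast (by rw [mul_comm]; exact H.Neven : (n^2/2) * 2 = n ^ 2)
    have h0 : (n : k) ≠ 0 := by exact_mod_cast H.hn.ne'
    rw [mul_assoc, mul_comm 2, this, inv_mul_cancel₀ (by positivity), one_smul]
  · intro t ht ht0
    rw [← Finset.sum_smul]
    have : ∑ i ∈ Finset.range (n^2/2), q⁻¹ ^ (2 * i * t) = 0 := by
      have h1 := geom_sum_mul (q⁻¹ ^ (2 * t)) (n^2/2)
      have h2 : (q⁻¹ ^ (2 * t)) ^ (n^2/2) = 1 := by
        rw [← pow_mul, inv_pow, show 2 * t * (n^2/2) = (2 * (n^2/2)) * t by ring, H.Neven, pow_mul, H.qN]; simp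
      rw [h2, sub_self] at h1
      have h3 : q⁻¹ ^ (2 * t) ≠ 1 := by
        intro h
        have := Nat.le_of_dvd (by omega) (H.hq.inv.dvd_of_pow_eq_one _ h)
        have := H.Neven
        rw [Finset.mem_range] at ht
        omega
      rw [← (mul_eq_zero.1 h1).resolve_right (sub_ne_zero.2 h3)]
      apply Finset.sum_congr rfl; intro i _; rw [← pow_mul]; congr 1; ring
    rw [this, zero_smul]

theorem sum_e [CharZero k] (H : Hyp n q) {x : U k n q} (h : ∀ i j, x * eIdem k n q i j = 0) : x = 0 := by
  have h1 : oneJ k n q 0 + oneJ k n q 1 = 1 := by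
    simp only [oneJ, if_true, one_ne_zero, if_false]
    rw [← smul_add, add_add_sub_cancel, ← two_smul k, smul_smul, inv_mul_cancel₀ two_ne_zero, one_smul]
  have h2 : x = ∑ i ∈ Finset.range (n^2/2), (x * eIdem k n q i 0 + x * eIdem k n q i 1) := by
    simp only [eIdem, ← mul_add, h1, mul_one]
    rw [← Finset.mul_sum, sum_phi H, mul_one]
  rw [h2]; simp [h]

/-- the map `W → U e` -/
def Dm (n : ℕ) (q : k) (i j : ℕ) : W k (n^2) →ₗ[k] U k n q :=
  mkW (n^2) fun a b => F k n q ^ a * E k n q ^ b * eIdem k n q i j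

theorem Dm_w (i j a b : ℕ) : Dm n q i j (w k (n^2) a b) = F k n q ^ a * E k n q ^ b * eIdem k n q i j := by
  refine mkW_w (fun a b h => ?_) a b
  rcases h with h | h
  · rw [F_pow' h, zero_mul, zero_mul]
  · rw [E_pow' h, mul_zero, zero_mul]

theorem Dm_K (H : Hyp n q) (i j a b : ℕ) : Dm n q i j (opK (chr H i j) (w k (n^2) a b)) =
    K k n q * Dm n q i j (w k (n^2) a b) := by
  rw [opK_w, map_smul, Dm_w, wt_mon (K_E H.hn) (K_F H.hn) (K_e H i j), cK]

theorem Dm_Kh (H : Hyp n q) (i j a b : ℕ) : Dm n q i j (opKh (chr H i j) (w k (n^2) a b)) =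
    Kh k n q * Dm n q i j (w k (n^2) a b) := by
  rw [opKh_w, map_smul, Dm_w, wt_mon (Kh_E H.hn) (Kh_F H.hn) (Kh_e H i j), cKh]

theorem Dm_F (χ : Chr n q) (i j a b : ℕ) : Dm n q i j (opF χ (w k (n^2) a b)) =
    F k n q * Dm n q i j (w k (n^2) a b) := by
  rw [opF_w, Dm_w, Dm_w, pow_succ', mul_assoc, mul_assoc, mul_assoc]

theorem Dm_E (H : Hyp n q) (i j a b : ℕ) : Dm n q i j (opE (chr H i j) (w k (n^2) a b)) =
    E k n q * Dm n q i j (w k (n^2) a b) := by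
  have h0 := H.q0
  rw [opE_w _ H, map_add, map_smul, map_smul, Dm_w, Dm_w, Dm_w]
  cases a with
  | zero => rw [cE_zero, zero_smul, pow_zero, one_smul, add_zero, pow_zero, one_mul, one_mul, pow_succ', mul_assoc]
  | succ a =>
    have e1 : Lq k n q * (E k n q ^ b * eIdem k n q i j) =
        ((chr H i j).lam * (q⁻¹ ^ 2) ^ b) • (E k n q ^ b * eIdem k n q i j) := by
      rw [← mul_assoc, skew_pow_right (L_E H), smul_mul_assoc, mul_assoc, L_e H, mul_smul_comm, smul_smul, mul_comm]
      rfl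
    have e2 := E_F_pow (mul_inv_cancel₀ h0) (F_E (k := k) (n := n) (q := q)) (L_F H) a
    have e3 : E k n q * (F k n q ^ (a+1) * E k n q ^ b * eIdem k n q i j) =
      (E k n q * F k n q ^ (a+1)) * (E k n q ^ b * eIdem k n q i j) := by simp only [mul_assoc]
    rw [e3, e2, Nat.add_sub_cancel, sub_mul, smul_mul_assoc, smul_mul_assoc, sub_mul, smul_mul_assoc,
      mul_assoc (F k n q ^ a) (Lq k n q), e1, mul_smul_comm, pow_succ' (E k n q) b]
    simp only [mul_assoc]
    rw [cE, gq, pow_succ' q a]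
    module

theorem Dm_rep (H : Hyp n q) (i j : ℕ) (u : U k n q) (x : W k (n^2)) :
    Dm n q i j (rep H (chr H i j) u x) = u * Dm n q i j x := by
  have ext : ∀ (f : Module.End k (W k (n^2))) (v : U k n q),
      (∀ a b, Dm n q i j (f (w k (n^2) a b)) = v * Dm n q i j (w k (n^2) a b)) →
      ∀ x, Dm n q i j (f x) = Algebra.lmul k (U k n q) v (Dm n q i j x) := by
    intro f v h x
    have : (Dm n q i j).comp f = (LinearMap.mulLeft k v).comp (Dm n q i j) :=
      W_ext (fun a b _ _ => h a b)
    exact congrArg (fun g => g x) this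
  have := intertwine (rep H (chr H i j)) (Algebra.lmul k (U k n q)) (Dm n q i j) ?_ u x
  · exact this
  intro t
  match t with
  | 0 => exact ext _ (K k n q) (fun a b => by rw [← Dm_K H, ← rep_K _ H]; rfl)
  | 1 => exact ext _ (Kh k n q) (fun a b => by rw [← Dm_Kh H, ← rep_Kh _ H]; rfl)
  | 2 => exact ext _ (E k n q) (fun a b => by rw [← Dm_E H, ← rep_E _ H]; rfl)
  | 3 => exact ext _ (F k n q) (fun a b => by rw [← Dm_F (chr H i j), ← rep_F _ H]; rfl)

theorem pbw_mem (H : Hyp n q) {a : ℕ} (b c d : ℕ) (ha : a ≤ n^2-2) :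
    F k n q ^ a * K k n q ^ c * Kh k n q ^ d * E k n q ^ b ∈ pbw k n q := by
  by_cases hb : n^2 ≤ b
  · rw [E_pow' hb, mul_zero]; exact zero_mem _
  have hn := H.hn
  have hN : 0 < n^2 := Nat.pow_pos hn
  apply Submodule.subset_span
  refine ⟨a, b, c % n, d % (n^2), ha, by omega, Nat.le_sub_one_of_lt (Nat.mod_lt _ hn),
    Nat.le_sub_one_of_lt (Nat.mod_lt _ hN), ?_⟩
  have e1 : K k n q ^ c = K k n q ^ (c % n) := by
    conv_lhs => rw [← Nat.div_add_mod c n, pow_add, pow_mul, K_pow, one_pow, one_mul]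
  have e2 : Kh k n q ^ d = Kh k n q ^ (d % (n^2)) := by
    conv_lhs => rw [← Nat.div_add_mod d (n^2), pow_add, pow_mul, Kh_pow', one_pow, one_mul]
  rw [e1, e2]

theorem pbw_rep (H : Hyp n q) (χ : Chr n q) {x : U k n q} (hx : x ∈ pbw k n q)
    (hF : F k n q * x = 0) : rep H χ x (w k (n^2) 0 0) = 0 := by
  have hN := H.N16
  let G : Module.End k (W k (n^2)) := mkW (n^2) fun a b => if a = 0 ∨ n^2 ≤ a then 0 else w k (n^2) (a-1) b
  have hG : ∀ a b, a ≤ n^2-2 → G (opF χ (w k (n^2) a b)) = w k (n^2) a b := by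
    intro a b ha
    rw [opF_w, mkW_w, if_neg (by omega), Nat.add_sub_cancel]
    intro a b h
    split_ifs with h2
    · rfl
    · rw [w_zero (by omega)]
  have key : ∀ x ∈ pbw k n q, G (opF χ (rep H χ x (w k (n^2) 0 0))) = rep H χ x (w k (n^2) 0 0) := by
    intro x hx
    induction hx using Submodule.span_induction with
    | mem x h =>
      obtain ⟨a, b, c, d, ha, hb, hc, hd, rfl⟩ := h
      rw [map_mul, map_mul, map_mul, map_pow, map_pow, map_pow, map_pow, rep_F, rep_K, rep_Kh, rep_E,
        Module.End.mul_apply, Module.End.mul_apply, Module.End.mul_apply, opE_0 χ H,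
        pow_w (opKh_w χ _ _), map_smul, pow_w (opK_w χ _ _)]
      simp only [map_smul, opF_pow]
      rw [hG _ _ (by omega)]
    | zero => simp
    | add x y _ _ hx hy => simp only [map_add, LinearMap.add_apply, hx, hy]
    | smul c x _ hx => simp only [map_smul, LinearMap.smul_apply, hx]
  have h3 : opF χ (rep H χ x (w k (n^2) 0 0)) = rep H χ (F k n q * x) (w k (n^2) 0 0) := by
    rw [map_mul, rep_F]; rfl
  rw [← key x hx, h3, hF]; simp

theorem pbw_inj [CharZero k] (H : Hyp n q) {x : U k n q} (hx : x ∈ pbw k n q)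
    (hF : F k n q * x = 0) : x = 0 := by
  apply sum_e H
  intro i j
  have := Dm_rep H i j x (w k (n^2) 0 0)
  rw [pbw_rep H _ hx hF, map_zero, Dm_w] at this
  simpa using this.symm

theorem wt_pbw (H : Hyp n q) {x : U k n q} {d : k} {c' d' : ℕ} (hxe : x = K k n q ^ c' * Kh k n q ^ d')
    (hF : x * F k n q = d • (F k n q * x)) {y : U k n q} (hy : y ∈ pbw k n q) : x * y ∈ pbw k n q := by
  induction hy using Submodule.span_induction with
  | mem y h =>
    obtain ⟨a, b, c, e, ha, hb, hc, hd, rfl⟩ := h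
    have : x * (F k n q ^ a * K k n q ^ c * Kh k n q ^ e * E k n q ^ b) = d ^ a •
       (F k n q ^ a * K k n q ^ (c'+c) * Kh k n q ^ (d'+e) * E k n q ^ b) := by
      simp only [← mul_assoc]
      rw [skew_pow_right hF]
      simp only [smul_mul_assoc]
      have := KKh_exp (k := k) (n := n) (q := q) c' d' c e
      rw [← hxe] at this
      rw [mul_assoc _ (K k n q ^ c), mul_assoc _ x, this]
      simp only [mul_assoc]
    rw [this]
    exact Submodule.smul_mem _ _ (pbw_mem H _ _ _ ha)
  | zero => simp
  | add x y _ _ hx hy => rw [mul_add]; exact add_mem hx hy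
  | smul c x _ hx => rw [mul_smul_comm]; exact Submodule.smul_mem _ _ hx

/-- span of all monomials -/
def Qs (k : Type) [Field k] (n : ℕ) (q : k) : Submodule k (U k n q) :=
  Submodule.span k {x | ∃ a b c d : ℕ, x = F k n q ^ a * K k n q ^ c * Kh k n q ^ d * E k n q ^ b}

theorem mem_Qs (a b c d : ℕ) : F k n q ^ a * K k n q ^ c * Kh k n q ^ d * E k n q ^ b ∈ Qs k n q :=
  Submodule.subset_span ⟨a, b, c, d, rfl⟩

theorem Qs_aux (x : U k n q) (h : ∀ a b c d : ℕ, x * (F k n q ^ a * K k n q ^ c * Kh k n q ^ d * E k n q ^ b) ∈ Qs k n q) :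
    ∀ y ∈ Qs k n q, x * y ∈ Qs k n q := by
  intro y hy
  induction hy using Submodule.span_induction with
  | mem y h' => obtain ⟨a, b, c, d, rfl⟩ := h'; exact h a b c d
  | zero => simp
  | add x y _ _ hx hy => rw [mul_add]; exact add_mem hx hy
  | smul c x _ hx => rw [mul_smul_comm]; exact Submodule.smul_mem _ _ hx

theorem skew_symm {A : Type*} [Ring A] [Algebra k A] {x y : A} {c : k} (hc : c ≠ 0) (h : x * y = c • (y * x)) :
    y * x = c⁻¹ • (x * y) := by rw [h, smul_smul, inv_mul_cancel₀ hc, one_smul]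

theorem Qs_top (H : Hyp n q) (y : U k n q) : y ∈ Qs k n q := by
  have h0 := H.q0
  have := span_top (Qs k n q) ?_ y 1 ?_
  · simpa using this
  · intro t
    fin_cases t
    · change ∀ x ∈ _, K k n q * x ∈ _
      apply Qs_aux
      intro a b c d
      simp only [← mul_assoc]
      rw [skew_pow_right (K_F (k := k) (q := q) H.hn) a]
      simp only [smul_mul_assoc]
      rw [mul_assoc (F k n q ^ a), ← pow_succ']
      exact Submodule.smul_mem _ _ (mem_Qs _ _ _ _)
    · change ∀ x ∈ _, Kh k n q * x ∈ _
      apply Qs_aux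
      intro a b c d
      simp only [← mul_assoc]
      rw [skew_pow_right (Kh_F (k := k) (q := q) H.hn) a]
      simp only [smul_mul_assoc]
      rw [mul_assoc (F k n q ^ a), ← (KKh_comm.pow_left c).eq, ← mul_assoc, mul_assoc _ (Kh k n q), ← pow_succ']
      exact Submodule.smul_mem _ _ (mem_Qs _ _ _ _)
    · change ∀ x ∈ _, E k n q * x ∈ _
      apply Qs_aux
      intro a b c d
      have e1 : ∃ s : k, E k n q * (K k n q ^ c * Kh k n q ^ d) = s • ((K k n q ^ c * Kh k n q ^ d) * E k n q) := by
        have hc := skew_pow_right (skew_symm (by positivity) (K_E (k := k) (q := q) H.hn)) c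
        have hd := skew_pow_right (skew_symm (by positivity) (Kh_E (k := k) (q := q) H.hn)) d
        exact ⟨_, by rw [← mul_assoc, hc, smul_mul_assoc, mul_assoc, hd, mul_smul_comm, smul_smul, mul_assoc]⟩
      obtain ⟨s, hs⟩ := e1
      have e2 : E k n q * (K k n q ^ c * (Kh k n q ^ d * E k n q ^ b)) =
          s • (K k n q ^ c * (Kh k n q ^ d * E k n q ^ (b+1))) := by
        rw [← mul_assoc (K k n q ^ c), ← mul_assoc, hs, smul_mul_assoc, mul_assoc, ← pow_succ', mul_assoc]
      cases a with
      | zero =>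
        simp only [pow_zero, one_mul, mul_assoc]
        rw [e2]
        have := mem_Qs (k := k) (n := n) (q := q) 0 (b+1) c d
        simp only [pow_zero, one_mul, mul_assoc] at this
        exact Submodule.smul_mem _ _ this
      | succ a =>
        have e3 : Lq k n q * (K k n q ^ c * (Kh k n q ^ d * E k n q ^ b)) =
            K k n q ^ (n-1+c) * (Kh k n q ^ (1+d) * E k n q ^ b) := by
          rw [← mul_assoc (K k n q ^ c), ← mul_assoc, Lq_eq, KKh_exp, mul_assoc]
        simp only [mul_assoc]
        rw [← mul_assoc (E k n q), E_F_pow (mul_inv_cancel₀ h0) F_E (L_F H)]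
        simp only [sub_mul, smul_mul_assoc, mul_assoc, e2, e3, mul_smul_comm]
        have hm := fun a b c d => mem_Qs (k := k) (n := n) (q := q) a b c d
        simp only [mul_assoc] at hm
        refine sub_mem (Submodule.smul_mem _ _ (Submodule.smul_mem _ _ (hm _ _ _ _)))
          (Submodule.smul_mem _ _ (sub_mem (hm _ _ _ _) (Submodule.smul_mem _ _ (hm _ _ _ _))))
    · change ∀ x ∈ _, F k n q * x ∈ _
      apply Qs_aux
      intro a b c d
      simp only [← mul_assoc]
      rw [← pow_succ']
      exact mem_Qs _ _ _ _
  · simpa using mem_Qs (k := k) (n := n) (q := q) 0 0 0 0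

theorem ex_pbw (H : Hyp n q) (y : U k n q) : ∃ y' ∈ pbw k n q, F k n q * y' = F k n q * y := by
  have hN := H.N16
  have hy := Qs_top H y
  induction hy using Submodule.span_induction with
  | mem y h =>
    obtain ⟨a, b, c, d, rfl⟩ := h
    by_cases ha : a ≤ n^2-2
    · exact ⟨_, pbw_mem H b c d ha, rfl⟩
    · refine ⟨0, zero_mem _, ?_⟩
      simp only [← mul_assoc]
      rw [← pow_succ', F_pow' (by omega)]; simp
  | zero => exact ⟨0, zero_mem _, rfl⟩
  | add x y _ _ hx hy =>
    obtain ⟨x', h1, h2⟩ := hx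
    obtain ⟨y', h3, h4⟩ := hy
    exact ⟨x' + y', add_mem h1 h3, by rw [mul_add, mul_add, h2, h4]⟩
  | smul c x _ hx =>
    obtain ⟨x', h1, h2⟩ := hx
    exact ⟨c • x', Submodule.smul_mem _ _ h1, by rw [mul_smul_comm, mul_smul_comm, h2]⟩

theorem EF_div (H : Hyp n q) (a s : ℕ) : ∃ y, E k n q ^ s * F k n q ^ (a + s) = F k n q ^ a * y := by
  induction s with
  | zero => exact ⟨1, by simp⟩
  | succ s ih =>
    obtain ⟨y, hy⟩ := ih
    have h1 : ∃ z, E k n q * F k n q ^ (a+s+1) = F k n q ^ (a+s) * z := by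
      rw [E_F_pow (mul_inv_cancel₀ H.q0) F_E (L_F H)]
      refine ⟨q ^ (a+s+1) • (F k n q * E k n q) - (q * ∑ t ∈ Finset.range (a+s+1), q ^ t) • (1 - q ^ (a+s) • Lq k n q), ?_⟩
      simp only [mul_sub, mul_smul_comm, mul_one, pow_succ, mul_assoc]
    obtain ⟨z, hz⟩ := h1
    exact ⟨y * z, by rw [pow_succ, mul_assoc, ← add_assoc, hz, ← mul_assoc, hy, mul_assoc]⟩

theorem beta_div (H : Hyp n q) {i : ℕ} (hi : i ≤ n^2/2) (h1 : 1 ≤ i) (j : ℕ) : ∃ y, F k n q * y = beta k n q i j := by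
  have hN := H.N16
  have hN2 := H.Neven
  obtain ⟨y, hy⟩ := EF_div H (n^2-1-(2*i-2)) (2*i-2)
  rw [Nat.sub_add_cancel (by omega)] at hy
  refine ⟨F k n q ^ (n^2-1-(2*i-2)-1) * y * eIdem k n q i j, ?_⟩
  rw [← mul_assoc, ← mul_assoc, ← pow_succ', Nat.sub_add_cancel (by omega), ← hy, beta, alpha, mul_assoc]

theorem gam_spec [CharZero k] (H : Hyp n q) {i : ℕ} (hi : i ≤ n^2/2) (h1 : 1 ≤ i) (j : ℕ) :
    gam k n q i j ∈ pbw k n q ∧ F k n q * gam k n q i j = beta k n q i j := by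
  have hex : ∃! x, x ∈ pbw k n q ∧ F k n q * x = beta k n q i j := by
    obtain ⟨y, hy⟩ := beta_div H hi h1 j
    obtain ⟨y', h2, h3⟩ := ex_pbw H y
    refine ⟨y', ⟨h2, by rw [h3, hy]⟩, ?_⟩
    rintro z ⟨hz1, hz2⟩
    rw [← sub_eq_zero]
    exact pbw_inj H (sub_mem hz1 h2) (by rw [mul_sub, hz2, h3, hy, sub_self])
  rw [gam, dif_pos hex]
  exact hex.choose_spec.1

theorem gam_wt [CharZero k] (H : Hyp n q) {i : ℕ} (hi : i ≤ n^2/2) (h1 : 1 ≤ i) (j : ℕ)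
    {x : U k n q} {d μ : k} {c' d' : ℕ} (hxe : x = K k n q ^ c' * Kh k n q ^ d') (hd : d ≠ 0)
    (hF : x * F k n q = d • (F k n q * x)) (hb : x * beta k n q i j = (d * μ) • beta k n q i j) :
    x * gam k n q i j = μ • gam k n q i j := by
  obtain ⟨g1, g2⟩ := gam_spec H hi h1 j
  rw [← sub_eq_zero]
  apply pbw_inj H (sub_mem (wt_pbw H hxe hF g1) (Submodule.smul_mem _ _ g1))
  rw [mul_sub, mul_smul_comm, ← mul_assoc, skew_symm hd hF, smul_mul_assoc, mul_assoc, g2, hb, smul_smul,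
    ← mul_assoc, inv_mul_cancel₀ hd, one_mul, sub_self]

theorem alpha_wt {x : U k n q} {d μ : k} (hF : x * F k n q = d • (F k n q * x)) {i j : ℕ}
    (he : x * eIdem k n q i j = μ • eIdem k n q i j) :
    x * alpha k n q i j = (d ^ (n^2-1) * μ) • alpha k n q i j := by
  rw [alpha, ← mul_assoc, skew_pow_right hF, smul_mul_assoc, mul_assoc, he, mul_smul_comm, smul_smul]

theorem beta_wt {x : U k n q} {c μ : k} (hE : x * E k n q = c • (E k n q * x)) {i j : ℕ}
    (he : x * alpha k n q i j = μ • alpha k n q i j) :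
    x * beta k n q i j = (c ^ (2*i-2) * μ) • beta k n q i j := by
  rw [beta, ← mul_assoc, skew_pow_right hE, smul_mul_assoc, mul_assoc, he, mul_smul_comm, smul_smul]

theorem q_sq_inv (H : Hyp n q) : (q ^ 2) ^ (n^2-1) = (q⁻¹) ^ 2 := by
  have h0 := H.q0
  rw [inv_pow]
  apply eq_inv_of_mul_eq_one_left
  rw [← pow_succ, Nat.sub_add_cancel (Nat.pow_pos H.hn), pow_right_comm, H.qN, one_pow]

theorem L_alpha (H : Hyp n q) {i : ℕ} (h1 : 1 ≤ i) (j : ℕ) :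
    Lq k n q * alpha k n q i j = q ^ (2*i-2) • alpha k n q i j := by
  have h0 := H.q0
  rw [alpha_wt (L_F H) (L_e H i j), q_sq_inv H]
  congr 1
  obtain ⟨i, rfl⟩ := Nat.exists_eq_add_of_le h1
  rw [show 2 * (1 + i) - 2 = 2 * i by omega, show 2 * (1 + i) = 2 + 2 * i by ring, pow_add]
  field_simp

theorem Z_alpha (H : Hyp n q) (i j : ℕ) :
    Zq k n q * alpha k n q i j = (-sg k j) • alpha k n q i j := by
  have h := H.N16
  have h2 := H.Neven
  rw [alpha_wt (Z_F H) (Z_e H i j), Odd.neg_one_pow ⟨n^2/2-1, by omega⟩, neg_one_mul]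

theorem L_gam [CharZero k] (H : Hyp n q) {i : ℕ} (hi : i ≤ n^2/2) (h1 : 1 ≤ i) (j : ℕ) :
    Lq k n q * gam k n q i j = (q⁻¹) ^ (2 * i) • gam k n q i j := by
  have h0 := H.q0
  refine gam_wt H hi h1 j Lq_eq (by positivity) (L_F H) ?_
  rw [beta_wt (L_E H) (L_alpha H h1 j)]
  congr 1
  obtain ⟨i, rfl⟩ := Nat.exists_eq_add_of_le h1
  rw [show 2 * (1 + i) - 2 = 2 * i by omega, show 2 * (1 + i) = 2 + 2 * i by ring, pow_add (q⁻¹), ← pow_mul, mul_comm 2 (2 * i), pow_mul (q⁻¹)]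
  simp only [inv_pow]
  field_simp

theorem Z_gam [CharZero k] (H : Hyp n q) {i : ℕ} (hi : i ≤ n^2/2) (h1 : 1 ≤ i) (j : ℕ) :
    Zq k n q * gam k n q i j = sg k j • gam k n q i j := by
  refine gam_wt H hi h1 j Zq_eq (by norm_num) (Z_F H) ?_
  rw [beta_wt (Z_E H) (Z_alpha H i j), Even.neg_one_pow ⟨i-1, by omega⟩]
  congr 1; ring

theorem F_alpha (H : Hyp n q) (i j : ℕ) : F k n q * alpha k n q i j = 0 := by
  rw [alpha, ← mul_assoc, ← pow_succ', F_pow' (by omega), zero_mul]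

theorem mul_fix {V : Type*} [AddCommGroup V] [Module k V] {f g : Module.End k V} {x : V} (hf : f x = x) (hg : g x = x) :
    (f * g) x = x := by rw [Module.End.mul_apply, hg, hf]

theorem rep_e [CharZero k] (H : Hyp n q) (i j : ℕ) :
    rep H (chr H i j) (eIdem k n q i j) (w k (n^2) 0 0) = w k (n^2) 0 0 := by
  have h0 := H.q0
  set χ := chr H i j with hχ
  have hL : rep H χ (Lq k n q) (w k (n^2) 0 0) = q ^ (2 * i) • w k (n^2) 0 0 := by
    have := opL_w χ H 0 0
    rw [← rep_K χ H, ← rep_Kh χ H, ← map_pow, ← map_mul] at this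
    simp only [pow_zero, mul_one] at this
    exact this
  have hK := opK_w χ 0 0
  have hKh := opKh_w χ 0 0
  have hc : χ.kap * (χ.kap * χ.lam) ^ (n/2) = sg k j := by
    set y := sg k j * (q ^ (2 * i)) ^ ((n^2-n)/2) with hy
    have hy1 : y ^ n = 1 := lam_pow H i j
    have e1 : χ.kap * (χ.kap * χ.lam) ^ (n/2) = y ^ ((1 + n/2) * (1 + n/2)) * (q ^ (2 * i)) ^ (n/2) := by
      change y ^ (1 + n/2) * (y ^ (1 + n/2) * q ^ (2 * i)) ^ (n/2) = _
      clear_value y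
      rw [pow_mul y, pow_add (y ^ (1 + n/2)), pow_one, mul_pow _ (q ^ (2 * i)), mul_assoc]
    have e2 : ∃ M, (1 + n/2) * (1 + n/2) = n * M + 1 := by
      obtain ⟨m, rfl⟩ := H.exm
      exact ⟨m + 2, by rw [half_n]; ring⟩
    obtain ⟨M, hM⟩ := e2
    have e3 : 2 * i * ((n^2-n)/2) + 2 * i * (n/2) = n^2 * i := by
      obtain ⟨m, rfl⟩ := H.exm
      rw [half_d, half_n]; ring
    rw [e1, hM, pow_add, pow_mul, hy1, one_pow, one_mul, pow_one, hy, mul_assoc, ← pow_mul, ← pow_mul, ← pow_add,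
      e3, pow_mul, H.qN, one_pow, mul_one]
  have hZ : rep H χ (Zq k n q) (w k (n^2) 0 0) = sg k j • w k (n^2) 0 0 := by
    rw [Zq, map_mul, map_pow, rep_K, rep_Kh, Module.End.mul_apply, pow_w hKh, map_smul, hK, smul_smul]
    congr 1
    rw [← hc]; simp [cK, cKh, mul_comm]
  rw [eIdem, map_mul]
  apply mul_fix
  · have ht : ∀ t, rep H χ ((((q⁻¹) ^ (2 * i)) • Lq k n q) ^ t) (w k (n^2) 0 0) = w k (n^2) 0 0 := by
      intro t
      have h1 : rep H χ ((((q⁻¹) ^ (2 * i)) • Lq k n q)) (w k (n^2) 0 0) = (1:k) • w k (n^2) 0 0 := by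
        rw [map_smul, LinearMap.smul_apply, hL, smul_smul, ← mul_pow, inv_mul_cancel₀ h0, one_pow]
      rw [map_pow, pow_w h1, one_pow, one_smul]
    rw [phi_eq, map_smul, map_sum, LinearMap.smul_apply, LinearMap.sum_apply, Finset.sum_congr rfl (fun t _ => ht t),
      Finset.sum_const, Finset.card_range, ← Nat.cast_smul_eq_nsmul k, smul_smul]
    have : ((n^2/2 : ℕ) : k) * 2 = (n:k)^2 := by
      exact_mod_cast (by rw [mul_comm]; exact H.Neven : (n^2/2) * 2 = n ^ 2)
    have h0 : (n : k) ≠ 0 := by exact_mod_cast H.hn.ne'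
    rw [mul_assoc, mul_comm 2, this, inv_mul_cancel₀ (pow_ne_zero _ h0), one_smul]
  · have e : oneJ k n q j = (2 : k)⁻¹ • (1 + sg k j • Zq k n q) := by
      unfold oneJ sg Zq; split_ifs <;> module
    rw [e, map_smul, map_add, map_smul, map_one, LinearMap.smul_apply, LinearMap.add_apply, LinearMap.smul_apply, hZ,
      smul_smul, ← pow_two, sg_sq, one_smul, Module.End.one_apply, ← two_smul k, smul_smul, inv_mul_cancel₀ two_ne_zero, one_smul]

/-- coordinate functional -/
def cf (k : Type) [Field k] (N s : ℕ) : W k N →ₗ[k] k :=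
  mkW N fun a b => if a = N - 1 ∧ b = s ∧ s < N then 1 else 0

theorem cf_w {N s : ℕ} (hN : 0 < N) (a b : ℕ) : cf k N s (w k N a b) = if a = N - 1 ∧ b = s ∧ s < N then 1 else 0 :=
  mkW_w (fun a b h => if_neg (by omega)) a b

theorem cf_E (H : Hyp n q) (χ : Chr n q) {s : ℕ} (hs : s + 1 < n^2) (x : W k (n^2)) :
    cf k (n^2) (s+1) (opE χ x) = q ^ (n^2-1) * cf k (n^2) s x := by
  have hN := H.N16
  have : (cf k (n^2) (s+1)).comp (opE χ) = q ^ (n^2-1) • cf k (n^2) s := by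
    apply W_ext
    intro a b ha hb
    rw [LinearMap.comp_apply, opE_w χ H, map_add, map_smul, map_smul, cf_w (by omega), cf_w (by omega),
      LinearMap.smul_apply, cf_w (by omega)]
    have h1 : cE χ a b • (if a - 1 = n^2 - 1 ∧ b = s + 1 ∧ s + 1 < n^2 then (1:k) else 0) = 0 := by
      rw [if_neg (by omega), smul_zero]
    rw [h1, add_zero]
    by_cases h : a = n^2 - 1 ∧ b = s
    · rw [if_pos (by omega), if_pos (by omega), h.1]
    · rw [if_neg (by omega), if_neg (by omega), smul_zero, smul_zero]
  exact congrArg (fun g => g x) this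

theorem E_alpha_ne [CharZero k] (H : Hyp n q) (i j : ℕ) : E k n q ^ (n^2-1) * alpha k n q i j ≠ 0 := by
  intro h
  have hN := H.N16
  have h1 := congrArg (fun u => rep H (chr H i j) u (w k (n^2) 0 0)) h
  simp only [alpha, map_mul, map_pow, Module.End.mul_apply, rep_e, rep_E, rep_F, opF_pow, zero_add, map_zero,
    LinearMap.zero_apply] at h1
  have h2 : ∀ s, s < n^2 → cf k (n^2) s ((opE (chr H i j) ^ s) (w k (n^2) (n^2-1) 0)) = (q ^ (n^2-1)) ^ s := by
    intro s
    induction s with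
    | zero => intro hs; rw [pow_zero, Module.End.one_apply, cf_w (by omega), if_pos (by omega), pow_zero]
    | succ s ih =>
      intro hs
      rw [pow_succ' (opE _), Module.End.mul_apply, cf_E H _ hs, ih (by omega), pow_succ' (q ^ (n^2-1))]
  have h3 := h2 (n^2-1) (by omega)
  rw [h1, map_zero] at h3
  exact pow_ne_zero _ (pow_ne_zero _ H.q0) h3.symm

end P3
end QFL
set_option linter.unusedSectionVars false
namespace QFL
section P4
variable {k : Type} [Field k] {n : ℕ} {q : k}

theorem gen_top (H : Hyp n q) (S : Subalgebra k (U k n q)) (hL : Lq k n q ∈ S) (hZ : Zq k n q ∈ S)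
    (hE : E k n q ∈ S) (hF : F k n q ∈ S) (u : U k n q) : u ∈ S := by
  have hK : K k n q ∈ S := by
    rw [K_eq H]; exact pow_mem (mul_mem hZ (pow_mem hL _)) _
  have hKh : Kh k n q ∈ S := by
    rw [Kh_eq H]; exact mul_mem hK hL
  obtain ⟨f, rfl⟩ := RingQuot.mkAlgHom_surjective k (Rel k n q) u
  induction f using FreeAlgebra.induction with
  | grade0 c => rw [AlgHom.commutes]; exact S.algebraMap_mem c
  | grade1 i =>
    match i with
    | 0 => exact hK
    | 1 => exact hKh
    | 2 => exact hE
    | 3 => exact hF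
  | mul a b ha hb => rw [map_mul]; exact mul_mem ha hb
  | add a b ha hb => rw [map_add]; exact add_mem ha hb

variable {V V' : Type*} [AddCommGroup V] [Module k V] [Module (U k n q) V] [IsScalarTower k (U k n q) V]
  [AddCommGroup V'] [Module k V'] [Module (U k n q) V'] [IsScalarTower k (U k n q) V']

def stab (S : Submodule k V) : Subalgebra k (U k n q) where
  carrier := {u | ∀ x ∈ S, u • x ∈ S}
  mul_mem' := by
    intro a b ha hb x hx
    rw [mul_smul]; exact ha _ (hb _ hx)
  add_mem' := by
    intro a b ha hb x hx
    rw [add_smul]; exact add_mem (ha _ hx) (hb _ hx)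
  algebraMap_mem' := by
    intro c x hx
    rw [algebraMap_smul]; exact S.smul_mem _ hx

/-- elements commuting with a linear map -/
def comms (f : V →ₗ[k] V') : Subalgebra k (U k n q) where
  carrier := {u | ∀ x, f (u • x) = u • f x}
  mul_mem' := by
    intro a b ha hb x
    rw [mul_smul, mul_smul, ha, hb]
  add_mem' := by
    intro a b ha hb x
    rw [add_smul, add_smul, map_add, ha, hb]
  algebraMap_mem' := by
    intro c x
    rw [algebraMap_smul, algebraMap_smul, map_smul]

/-- coefficient -/
def cc (q l : k) (s : ℕ) : k := gq q⁻¹ s * (1 - (q⁻¹) ^ (s-1) * l)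

theorem F_E_smul (H : Hyp n q) {x : V} {l : k} (hx : Lq k n q • x = l • x) (s : ℕ) :
    F k n q • (E k n q ^ s • x) = (q⁻¹) ^ s • (E k n q ^ s • (F k n q • x)) + cc q l s • (E k n q ^ (s-1) • x) := by
  cases s with
  | zero => simp [cc, gq]
  | succ s =>
    have h := F_E_pow F_E (L_E H) s
    rw [← mul_smul, h, add_smul, smul_assoc, smul_assoc, sub_smul, smul_assoc, mul_smul, mul_smul, hx,
      smul_comm _ l x, Nat.add_sub_cancel, cc, gq, Nat.add_sub_cancel]
    generalize E k n q ^ s • x = y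
    generalize E k n q ^ (s+1) • F k n q • x = z
    generalize (∑ t ∈ Finset.range (s+1), q⁻¹ ^ t) = c
    rw [mul_sub, mul_one, sub_smul, smul_sub, smul_smul, smul_smul, mul_assoc]

theorem wt_smul {x : V} {y : U k n q} {c l : k} (hE : y * E k n q = c • (E k n q * y)) (hx : y • x = l • x) (s : ℕ) :
    y • (E k n q ^ s • x) = (c ^ s * l) • (E k n q ^ s • x) := by
  rw [← mul_smul, skew_pow_right hE, smul_assoc, mul_smul, hx, smul_comm _ l x, smul_smul]

theorem E_smul (x : V) (s : ℕ) : E k n q • (E k n q ^ s • x) = E k n q ^ (s+1) • x := by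
  rw [← mul_smul, ← pow_succ']
theorem E_pow_smul (x : V) (s t : ℕ) : E k n q ^ t • (E k n q ^ s • x) = E k n q ^ (t+s) • x := by
  rw [← mul_smul, ← pow_add]
theorem E_big (x : V) {s : ℕ} (h : n^2 ≤ s) : E k n q ^ s • x = 0 := by
  rw [E_pow' h, zero_smul]

/-- relations -/
structure Rels (n : ℕ) (q : k) {V : Type*} [AddCommGroup V] [Module k V] [Module (U k n q) V]
    (r : ℕ) (σ : k) (α γ : V) : Prop where
  Fa : F k n q • α = 0
  Fg : F k n q • γ = E k n q ^ (r-1) • α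
  La : Lq k n q • α = q ^ (r-1) • α
  Lg : Lq k n q • γ = (q⁻¹) ^ (r+1) • γ
  Za : Zq k n q • α = (-σ) • α
  Zg : Zq k n q • γ = σ • γ

/-- the modules `P` -/
structure IsP (n : ℕ) (q : k) {V : Type*} [AddCommGroup V] [Module k V] [Module (U k n q) V]
    (r : ℕ) (σ : k) (α γ : V) : Prop extends Rels n q r σ α γ where
  hr1 : 1 ≤ r
  hrN : r < n^2
  hr : Odd r
  hσ : σ ≠ 0
  top : ∀ v : V, ∃ u : U k n q, v = u • γ
  am : ∃ u : U k n q, α = u • γ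
  ne : E k n q ^ (n^2-1) • α ≠ 0

section rels
variable {r : ℕ} {σ : k} {α γ : V}

theorem Rels.FEa (R : Rels n q r σ α γ) (H : Hyp n q) (s : ℕ) :
    F k n q • (E k n q ^ s • α) = cc q (q ^ (r-1)) s • (E k n q ^ (s-1) • α) := by
  rw [F_E_smul H R.La, R.Fa, smul_zero, smul_zero, zero_add]

theorem Rels.FEg (R : Rels n q r σ α γ) (H : Hyp n q) (s : ℕ) :
    F k n q • (E k n q ^ s • γ) = (q⁻¹) ^ s • (E k n q ^ (s + (r-1)) • α) +
      cc q ((q⁻¹) ^ (r+1)) s • (E k n q ^ (s-1) • γ) := by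
  rw [F_E_smul H R.Lg, R.Fg, E_pow_smul]

theorem gq_ne (H : Hyp n q) {s : ℕ} (h0 : 0 < s) (hs : s < n^2) : gq q⁻¹ s ≠ 0 := by
  intro h
  have h1 := geom_sum_mul q⁻¹ s
  change gq q⁻¹ s * _ = _ at h1
  rw [h, zero_mul] at h1
  have := Nat.le_of_dvd h0 (H.hq.inv.dvd_of_pow_eq_one _ (sub_eq_zero.1 h1.symm))
  omega

theorem cc0 (l : k) : cc q l 0 = 0 := by simp [cc, gq]

theorem ccA_ne (H : Hyp n q) {s : ℕ} (h1 : 1 ≤ r) (hr : r < n^2) (h0 : 0 < s) (hs : s < n^2) (hsr : s ≠ r) :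
    cc q (q ^ (r-1)) s ≠ 0 := by
  have hq0 := H.q0
  refine mul_ne_zero (gq_ne H h0 hs) ?_
  intro h
  rw [sub_eq_zero, inv_pow] at h
  have h2 : q ^ (s-1) = q ^ (r-1) := by
    have h3 : q ^ (s-1) ≠ 0 := pow_ne_zero _ hq0
    field_simp at h
    exact h
  have := H.hq.pow_inj (by omega) (by omega) h2
  omega

theorem ccA_zero (H : Hyp n q) : cc q (q ^ (r-1)) r = 0 := by
  have hq0 := H.q0
  rw [cc, ← mul_pow, inv_mul_cancel₀ hq0]; simp

theorem ccB_ne (H : Hyp n q) {s : ℕ} (hr : r < n^2) (h0 : 0 < s) (hs : s < n^2) (hsr : s ≠ n^2-r) :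
    cc q ((q⁻¹) ^ (r+1)) s ≠ 0 := by
  refine mul_ne_zero (gq_ne H h0 hs) ?_
  intro h
  rw [sub_eq_zero, ← pow_add, show s - 1 + (r+1) = s + r by omega] at h
  obtain ⟨c, hc⟩ := H.hq.inv.dvd_of_pow_eq_one _ h.symm
  have : c = 1 := by
    rcases c with _ | _ | c
    · omega
    · rfl
    · have : n^2 * (c+1+1) = n^2 * c + n^2 + n^2 := by ring
      have : 0 ≤ n^2 * c := by positivity
      omega
  subst this; omega

theorem ccB_zero (H : Hyp n q) (hr : r < n^2) : cc q ((q⁻¹) ^ (r+1)) (n^2-r) = 0 := by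
  rw [cc, ← pow_add, show n^2 - r - 1 + (r+1) = n^2 by omega, H.hq.inv.pow_eq_one]; simp

theorem IsP.ne' (R : IsP n q r σ α γ) (H : Hyp n q) : E k n q ^ (n^2-1) • γ ≠ 0 := by
  intro h
  have h1 := R.hr1
  have h2 := R.hrN
  have key : ∀ d, d < r → E k n q ^ (n^2-1-d) • γ = 0 := by
    intro d
    induction d with
    | zero => intro _; exact h
    | succ d ih =>
      intro hd
      have h3 := R.FEg H (n^2-1-d)
      rw [ih (by omega), smul_zero, E_big (V := V) α (by omega), smul_zero, zero_add] at h3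
      have h4 := (smul_eq_zero.1 h3.symm).resolve_left (ccB_ne H h2 (by omega) (by omega) (by omega))
      exact h4
  have h5 := R.FEg H (n^2-r)
  rw [ccB_zero H h2, zero_smul, add_zero, show n^2 - r = n^2-1-(r-1) by omega, key _ (by omega), smul_zero,
    show n^2-1-(r-1) + (r-1) = n^2-1 by omega] at h5
  exact R.ne ((smul_eq_zero.1 h5.symm).resolve_left (pow_ne_zero _ (inv_ne_zero H.q0)))

/-- basis vectors -/
def bv (n : ℕ) (q : k) {V : Type*} [AddCommGroup V] [Module (U k n q) V] (α γ : V) : Fin (n^2) ⊕ Fin (n^2) → V :=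
  Sum.elim (fun s => E k n q ^ (s : ℕ) • α) (fun s => E k n q ^ (s : ℕ) • γ)

theorem Rels.ZEa (R : Rels n q r σ α γ) (H : Hyp n q) (s : ℕ) :
    Zq k n q • (E k n q ^ s • α) = ((-1) ^ s * (-σ)) • (E k n q ^ s • α) := wt_smul (Z_E H) R.Za s
theorem Rels.ZEg (R : Rels n q r σ α γ) (H : Hyp n q) (s : ℕ) :
    Zq k n q • (E k n q ^ s • γ) = ((-1) ^ s * σ) • (E k n q ^ s • γ) := wt_smul (Z_E H) R.Zg s
theorem Rels.LEa (R : Rels n q r σ α γ) (H : Hyp n q) (s : ℕ) :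
    Lq k n q • (E k n q ^ s • α) = (((q⁻¹)^2) ^ s * q ^ (r-1)) • (E k n q ^ s • α) := wt_smul (L_E H) R.La s
theorem Rels.LEg (R : Rels n q r σ α γ) (H : Hyp n q) (s : ℕ) :
    Lq k n q • (E k n q ^ s • γ) = (((q⁻¹)^2) ^ s * (q⁻¹) ^ (r+1)) • (E k n q ^ s • γ) := wt_smul (L_E H) R.Lg s

/-- separate by parity -/
theorem par_sep [CharZero k] {X Y : V} {c : k} (hc : c ≠ 0) (hX : Zq k n q • X = (-c) • X) (hY : Zq k n q • Y = c • Y)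
    {z : V} (hz : Zq k n q • z = c • z) {a b : k} (h : z = a • X + b • Y) : a • X = 0 := by
  have h1 := hz
  rw [h, smul_add, smul_comm _ a X, smul_comm _ b Y, hX, hY] at h1
  have h2 : (2 * c) • (a • X) = 0 := by
    have : (2 * c) • (a • X) = c • (a • X + b • Y) - (a • (-c) • X + b • c • Y) := by module
    rw [this, h1, sub_self]
  exact (smul_eq_zero.1 h2).resolve_left (mul_ne_zero two_ne_zero hc)

theorem IsP.li [CharZero k] (R : IsP n q r σ α γ) (H : Hyp n q) : LinearIndependent k (bv n q α γ) := by
  rw [Fintype.linearIndependent_iff]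
  intro g hg
  rw [Fintype.sum_sum_type] at hg
  simp only [bv, Sum.elim_inl, Sum.elim_inr] at hg
  have hN := H.N16
  have key : ∀ s : ℕ, ∀ hs : s < n^2, g (Sum.inl ⟨s, hs⟩) = 0 ∧ g (Sum.inr ⟨s, hs⟩) = 0 := by
    intro s
    induction s using Nat.strong_induction_on with
    | _ s ih =>
      intro hs
      have h1 := congrArg (fun v => E k n q ^ (n^2-1-s) • v) hg
      simp only [smul_add, Finset.smul_sum, smul_zero] at h1
      rw [Finset.sum_eq_single_of_mem ⟨s, hs⟩ (Finset.mem_univ _), Finset.sum_eq_single_of_mem ⟨s, hs⟩ (Finset.mem_univ _)] at h1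
      · rw [smul_comm _ (g _), smul_comm _ (g _), E_pow_smul, E_pow_smul, show n^2-1-s+s = n^2-1 by omega] at h1
        have hz := R.ZEa H (n^2-1)
        have hy := R.ZEg H (n^2-1)
        have hodd : Odd (n^2-1) := ⟨n^2/2-1, by have := H.Neven; omega⟩
        rw [hodd.neg_one_pow, neg_one_mul, neg_neg] at hz
        rw [hodd.neg_one_pow, neg_one_mul] at hy
        have hσ := R.hσ
        have h2 := par_sep (neg_ne_zero.2 hσ) (by rw [neg_neg]; exact hz) hy (z := 0) (by simp) h1.symm
        rw [h2, zero_add] at h1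
        exact ⟨(smul_eq_zero.1 h2).resolve_right R.ne, (smul_eq_zero.1 h1).resolve_right (R.ne' H)⟩
      · rintro ⟨t, ht⟩ _ hts
        rcases lt_or_ge t s with h | h
        · rw [(ih t h ht).2]; simp
        · have : t ≠ s := fun h => hts (by simp [h])
          rw [smul_comm, E_pow_smul, E_big, smul_zero]
          change n^2 ≤ n^2-1-s+t
          omega
      · rintro ⟨t, ht⟩ _ hts
        rcases lt_or_ge t s with h | h
        · rw [(ih t h ht).1]; simp
        · have : t ≠ s := fun h => hts (by simp [h])
          rw [smul_comm, E_pow_smul, E_big, smul_zero]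
          change n^2 ≤ n^2-1-s+t
          omega
  rintro (⟨s, hs⟩ | ⟨s, hs⟩)
  · exact (key s hs).1
  · exact (key s hs).2

theorem mem_a (α γ : V) (s : ℕ) : E k n q ^ s • α ∈ Submodule.span k (Set.range (bv n q α γ)) := by
  by_cases h : s < n^2
  · exact Submodule.subset_span ⟨Sum.inl ⟨s, h⟩, rfl⟩
  · rw [E_big _ (by omega)]; exact zero_mem _
theorem mem_g (α γ : V) (s : ℕ) : E k n q ^ s • γ ∈ Submodule.span k (Set.range (bv n q α γ)) := by
  by_cases h : s < n^2
  · exact Submodule.subset_span ⟨Sum.inr ⟨s, h⟩, rfl⟩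
  · rw [E_big _ (by omega)]; exact zero_mem _

theorem stab_aux {S : Set V} {u : U k n q} (h : ∀ x ∈ S, u • x ∈ Submodule.span k S) :
    u ∈ stab (Submodule.span k S) := by
  intro x hx
  induction hx using Submodule.span_induction with
  | mem x h' => exact h x h'
  | zero => rw [smul_zero]; exact zero_mem _
  | add x y _ _ hx hy => rw [smul_add]; exact add_mem hx hy
  | smul c x _ hx => rw [smul_comm]; exact Submodule.smul_mem _ _ hx

theorem IsP.sp (R : IsP n q r σ α γ) (H : Hyp n q) : ⊤ ≤ Submodule.span k (Set.range (bv n q α γ)) := by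
  have ha := fun s => mem_a (k := k) (n := n) (q := q) α γ s
  have hg := fun s => mem_g (k := k) (n := n) (q := q) α γ s
  rintro v -
  obtain ⟨u, rfl⟩ := R.top v
  refine gen_top H (stab (Submodule.span k (Set.range (bv n q α γ)))) ?_ ?_ ?_ ?_ u γ (by simpa using hg 0)
  · apply stab_aux; rintro _ ⟨s | s, rfl⟩
    · simp only [bv, Sum.elim_inl]; rw [R.LEa H]; exact Submodule.smul_mem _ _ (ha _)
    · simp only [bv, Sum.elim_inr]; rw [R.LEg H]; exact Submodule.smul_mem _ _ (hg _)
  · apply stab_aux; rintro _ ⟨s | s, rfl⟩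
    · simp only [bv, Sum.elim_inl]; rw [R.ZEa H]; exact Submodule.smul_mem _ _ (ha _)
    · simp only [bv, Sum.elim_inr]; rw [R.ZEg H]; exact Submodule.smul_mem _ _ (hg _)
  · apply stab_aux; rintro _ ⟨s | s, rfl⟩
    · simp only [bv, Sum.elim_inl]; rw [E_smul]; exact ha _
    · simp only [bv, Sum.elim_inr]; rw [E_smul]; exact hg _
  · apply stab_aux; rintro _ ⟨s | s, rfl⟩
    · simp only [bv, Sum.elim_inl]; rw [R.FEa H]; exact Submodule.smul_mem _ _ (ha _)
    · simp only [bv, Sum.elim_inr]; rw [R.FEg H]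
      exact add_mem (Submodule.smul_mem _ _ (ha _)) (Submodule.smul_mem _ _ (hg _))

/-- the basis -/
def IsP.bas [CharZero k] (R : IsP n q r σ α γ) (H : Hyp n q) : Module.Basis (Fin (n^2) ⊕ Fin (n^2)) k V :=
  Module.Basis.mk (R.li H) (R.sp H)

/-- linear map defined on the basis -/
def IsP.mkL [CharZero k] {X : Type*} [AddCommGroup X] [Module k X] (R : IsP n q r σ α γ) (H : Hyp n q) (a g : ℕ → X) : V →ₗ[k] X :=
  (R.bas H).constr k (Sum.elim (fun s => a s) (fun s => g s))

theorem IsP.mkL_a [CharZero k] {X : Type*} [AddCommGroup X] [Module k X] (R : IsP n q r σ α γ) (H : Hyp n q) {a g : ℕ → X}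
    (ha : ∀ s, n^2 ≤ s → a s = 0) (s : ℕ) : R.mkL H a g (E k n q ^ s • α) = a s := by
  by_cases h : s < n^2
  · have := (R.bas H).constr_basis k (Sum.elim (fun s => a s) (fun s => g s)) (Sum.inl ⟨s, h⟩)
    rw [IsP.bas, Module.Basis.mk_apply] at this
    exact this
  · rw [E_big _ (by omega), ha s (by omega), map_zero]

theorem IsP.mkL_g [CharZero k] {X : Type*} [AddCommGroup X] [Module k X] (R : IsP n q r σ α γ) (H : Hyp n q) {a g : ℕ → X}
    (hg : ∀ s, n^2 ≤ s → g s = 0) (s : ℕ) : R.mkL H a g (E k n q ^ s • γ) = g s := by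
  by_cases h : s < n^2
  · have := (R.bas H).constr_basis k (Sum.elim (fun s => a s) (fun s => g s)) (Sum.inr ⟨s, h⟩)
    rw [IsP.bas, Module.Basis.mk_apply] at this
    exact this
  · rw [E_big _ (by omega), hg s (by omega), map_zero]

theorem IsP.ext [CharZero k] {X : Type*} [AddCommGroup X] [Module k X] (R : IsP n q r σ α γ) (H : Hyp n q) {f g : V →ₗ[k] X}
    (ha : ∀ s, s < n^2 → f (E k n q ^ s • α) = g (E k n q ^ s • α))
    (hg : ∀ s, s < n^2 → f (E k n q ^ s • γ) = g (E k n q ^ s • γ)) : f = g := by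
  apply (R.bas H).ext
  rintro (⟨s, hs⟩ | ⟨s, hs⟩)
  · rw [IsP.bas, Module.Basis.mk_apply]; exact ha s hs
  · rw [IsP.bas, Module.Basis.mk_apply]; exact hg s hs

theorem IsP.hom [CharZero k] (R : IsP n q r σ α γ) (H : Hyp n q) {a g : V'} (R' : Rels n q r σ a g) :
    ∃ f : V →ₗ[U k n q] V', f α = a ∧ f γ = g := by
  set f := R.mkL H (fun s => E k n q ^ s • a) (fun s => E k n q ^ s • g) with hf
  have fa : ∀ s, f (E k n q ^ s • α) = E k n q ^ s • a := R.mkL_a H (fun s hs => E_big _ hs)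
  have fg : ∀ s, f (E k n q ^ s • γ) = E k n q ^ s • g := R.mkL_g H (fun s hs => E_big _ hs)
  have aux : ∀ u : U k n q, (∀ s, f (u • (E k n q ^ s • α)) = u • (E k n q ^ s • a)) →
      (∀ s, f (u • (E k n q ^ s • γ)) = u • (E k n q ^ s • g)) → u ∈ comms f := by
    intro u h1 h2 x
    have : f.comp (Module.toModuleEnd k (S := U k n q) V u) = (Module.toModuleEnd k (S := U k n q) V' u).comp f := by
      apply R.ext H
      · intro s _; change f (u • (E k n q ^ s • α)) = u • f (E k n q ^ s • α); rw [h1, fa]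
      · intro s _; change f (u • (E k n q ^ s • γ)) = u • f (E k n q ^ s • γ); rw [h2, fg]
    exact congrArg (fun h => h x) this
  have hu : ∀ u : U k n q, u ∈ comms f := by
    apply gen_top H
    · exact aux _ (fun s => by rw [R.LEa H, R'.LEa H, map_smul, fa]) (fun s => by rw [R.LEg H, R'.LEg H, map_smul, fg])
    · exact aux _ (fun s => by rw [R.ZEa H, R'.ZEa H, map_smul, fa]) (fun s => by rw [R.ZEg H, R'.ZEg H, map_smul, fg])
    · exact aux _ (fun s => by rw [E_smul, E_smul, fa]) (fun s => by rw [E_smul, E_smul, fg])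
    · exact aux _ (fun s => by rw [R.FEa H, R'.FEa H, map_smul, fa])
        (fun s => by rw [R.FEg H, R'.FEg H, map_add, map_smul, fa, map_smul, fg])
  refine ⟨{ toFun := f, map_add' := map_add f, map_smul' := fun u x => hu u x }, ?_, ?_⟩
  · simpa using fa 0
  · simpa using fg 0

end rels
end P4
end QFL
set_option linter.unusedSectionVars false
namespace QFL
section P5
variable {k : Type} [Field k] [CharZero k] {n : ℕ} {q : k}
variable {V V' : Type*} [AddCommGroup V] [Module k V] [Module (U k n q) V] [IsScalarTower k (U k n q) V]
  [AddCommGroup V'] [Module k V'] [Module (U k n q) V'] [IsScalarTower k (U k n q) V']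
variable {r r' : ℕ} {σ : k} {α γ : V} {α' γ' : V'}

def IsP.cA (R : IsP n q r σ α γ) (H : Hyp n q) (s : ℕ) : V →ₗ[k] k :=
  R.mkL H (fun t => if t = s ∧ s < n^2 then 1 else 0) (fun _ => 0)
/-- coordinate -/
def IsP.cG (R : IsP n q r σ α γ) (H : Hyp n q) (s : ℕ) : V →ₗ[k] k :=
  R.mkL H (fun _ => 0) (fun t => if t = s ∧ s < n^2 then 1 else 0)

theorem IsP.cA_a (R : IsP n q r σ α γ) (H : Hyp n q) (s t : ℕ) :
    R.cA H s (E k n q ^ t • α) = if t = s ∧ s < n^2 then 1 else 0 :=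
  R.mkL_a H (fun t ht => if_neg (by omega)) t
theorem IsP.cA_g (R : IsP n q r σ α γ) (H : Hyp n q) (s t : ℕ) :
    R.cA H s (E k n q ^ t • γ) = 0 := R.mkL_g H (fun t ht => rfl) t
theorem IsP.cG_g (R : IsP n q r σ α γ) (H : Hyp n q) (s t : ℕ) :
    R.cG H s (E k n q ^ t • γ) = if t = s ∧ s < n^2 then 1 else 0 :=
  R.mkL_g H (fun t ht => if_neg (by omega)) t
theorem IsP.cG_a (R : IsP n q r σ α γ) (H : Hyp n q) (s t : ℕ) :
    R.cG H s (E k n q ^ t • α) = 0 := R.mkL_a H (fun t ht => rfl) t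

theorem IsP.coord (R : IsP n q r σ α γ) (H : Hyp n q) {x : V} (hA : ∀ s, s < n^2 → R.cA H s x = 0)
    (hG : ∀ s, s < n^2 → R.cG H s x = 0) : x = 0 := by
  have ea : ∀ t (ht : t < n^2), E k n q ^ t • α = R.bas H (Sum.inl ⟨t, ht⟩) := by
    intro t ht; rw [IsP.bas, Module.Basis.mk_apply]; rfl
  have eg : ∀ t (ht : t < n^2), E k n q ^ t • γ = R.bas H (Sum.inr ⟨t, ht⟩) := by
    intro t ht; rw [IsP.bas, Module.Basis.mk_apply]; rfl
  have h1 : ∀ s (hs : s < n^2), R.cA H s = (R.bas H).coord (Sum.inl ⟨s, hs⟩) := by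
    intro s hs
    apply R.ext H
    · intro t ht
      rw [R.cA_a, ea t ht, Module.Basis.coord_apply, Module.Basis.repr_self, Finsupp.single_apply]
      simp [hs]
    · intro t ht
      rw [R.cA_g, eg t ht, Module.Basis.coord_apply, Module.Basis.repr_self, Finsupp.single_apply]
      simp
  have h2 : ∀ s (hs : s < n^2), R.cG H s = (R.bas H).coord (Sum.inr ⟨s, hs⟩) := by
    intro s hs
    apply R.ext H
    · intro t ht
      rw [R.cG_a, ea t ht, Module.Basis.coord_apply, Module.Basis.repr_self, Finsupp.single_apply]
      simp
    · intro t ht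
      rw [R.cG_g, eg t ht, Module.Basis.coord_apply, Module.Basis.repr_self, Finsupp.single_apply]
      simp [hs]
  rw [← (R.bas H).forall_coord_eq_zero_iff]
  rintro (⟨s, hs⟩ | ⟨s, hs⟩)
  · rw [← h1 s hs]; exact hA s hs
  · rw [← h2 s hs]; exact hG s hs

/-- smul as a linear map -/
def smL (V : Type*) [AddCommGroup V] [Module k V] [Module (U k n q) V] [IsScalarTower k (U k n q) V]
    (u : U k n q) : V →ₗ[k] V := Module.toModuleEnd k (S := U k n q) V u

theorem IsP.cG_F (R : IsP n q r σ α γ) (H : Hyp n q) {t : ℕ} (ht : t < n^2) (x : V) :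
    R.cG H t (F k n q • x) = cc q ((q⁻¹) ^ (r+1)) (t+1) * R.cG H (t+1) x := by
  have h1 := R.hr1
  have h2 := R.hrN
  have : (R.cG H t).comp (smL V (F k n q)) = cc q ((q⁻¹) ^ (r+1)) (t+1) • R.cG H (t+1) := by
    apply R.ext H
    · intro s hs
      change R.cG H t (F k n q • _) = cc q ((q⁻¹) ^ (r+1)) (t+1) * R.cG H (t+1) _
      rw [R.FEa H, map_smul, R.cG_a, R.cG_a]; simp
    · intro s hs
      change R.cG H t (F k n q • _) = cc q ((q⁻¹) ^ (r+1)) (t+1) * R.cG H (t+1) _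
      rw [R.FEg H, map_add, map_smul (R.cG H t), map_smul (R.cG H t), R.cG_a, R.cG_g, R.cG_g, smul_zero, zero_add]
      rcases Nat.eq_zero_or_pos s with rfl | h0
      · rw [cc0, zero_smul, if_neg (by omega), mul_zero]
      · by_cases h : s = t + 1
        · subst h; rw [if_pos (by omega), if_pos (by omega), smul_eq_mul]
        · rw [if_neg (by omega), if_neg (by omega), smul_zero, mul_zero]
  exact congrArg (fun f => f x) this

theorem IsP.cA_F (R : IsP n q r σ α γ) (H : Hyp n q) {t : ℕ} (ht : t < n^2) (x : V) :
    R.cA H t (F k n q • x) = cc q (q ^ (r-1)) (t+1) * R.cA H (t+1) x +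
      (if r - 1 ≤ t then (q⁻¹) ^ (t-(r-1)) else 0) * R.cG H (t-(r-1)) x := by
  have h1 := R.hr1
  have h2 := R.hrN
  have : (R.cA H t).comp (smL V (F k n q)) = cc q (q ^ (r-1)) (t+1) • R.cA H (t+1) +
      (if r - 1 ≤ t then (q⁻¹) ^ (t-(r-1)) else 0) • R.cG H (t-(r-1)) := by
    apply R.ext H
    · intro s hs
      change R.cA H t (F k n q • _) = cc q (q ^ (r-1)) (t+1) * R.cA H (t+1) _ +
        (if r - 1 ≤ t then (q⁻¹) ^ (t-(r-1)) else 0) * R.cG H (t-(r-1)) _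
      rw [R.FEa H, map_smul, R.cG_a, R.cA_a, R.cA_a, mul_zero, add_zero]
      rcases Nat.eq_zero_or_pos s with rfl | h0
      · rw [cc0, zero_smul, if_neg (by omega), mul_zero]
      · by_cases h : s = t + 1
        · subst h; rw [if_pos (by omega), if_pos (by omega), smul_eq_mul]
        · rw [if_neg (by omega), if_neg (by omega), smul_zero, mul_zero]
    · intro s hs
      change R.cA H t (F k n q • _) = cc q (q ^ (r-1)) (t+1) * R.cA H (t+1) _ +
        (if r - 1 ≤ t then (q⁻¹) ^ (t-(r-1)) else 0) * R.cG H (t-(r-1)) _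
      rw [R.FEg H, map_add, map_smul (R.cA H t), map_smul (R.cA H t), R.cA_a, R.cA_g, R.cA_g, R.cG_g, smul_zero, add_zero,
        mul_zero, zero_add]
      by_cases h : s + (r - 1) = t
      · rw [if_pos (by omega), if_pos (by omega), if_pos (by omega), smul_eq_mul, show t - (r-1) = s by omega]
      · by_cases h3 : r - 1 ≤ t
        · rw [if_neg (by omega), if_neg (c := _ ∧ _) (by omega), smul_zero, mul_zero]
        · rw [if_neg (by omega), if_neg (by omega), smul_zero, zero_mul]
  exact congrArg (fun f => f x) this

theorem IsP.kerF (R : IsP n q r σ α γ) (H : Hyp n q) {x : V} (hx : F k n q • x = 0) :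
    ∃ a b : k, x = a • α + b • (E k n q ^ r • α) := by
  have h1 := R.hr1
  have h2 := R.hrN
  have hp : q⁻¹ ≠ 0 := inv_ne_zero H.q0
  have g1 : ∀ s, 0 < s → s < n^2 → s ≠ n^2 - r → R.cG H s x = 0 := by
    intro s h0 hs hne
    have := R.cG_F H (t := s-1) (by omega) x
    rw [hx, map_zero, Nat.sub_add_cancel h0] at this
    exact (mul_eq_zero.1 this.symm).resolve_left (ccB_ne H h2 h0 hs hne)
  have g2 : R.cG H 0 x = 0 := by
    have := R.cA_F H (t := r-1) (by omega) x
    rw [hx, map_zero, Nat.sub_add_cancel h1, ccA_zero H, zero_mul, zero_add, if_pos le_rfl, Nat.sub_self, pow_zero, one_mul] at this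
    exact this.symm
  have g3 : R.cG H (n^2-r) x = 0 := by
    have := R.cA_F H (t := n^2-1) (by omega) x
    have z : R.cA H (n^2-1+1) x = 0 := by
      have : R.cA H (n^2-1+1) = 0 := by
        apply R.ext H
        · intro s hs; rw [R.cA_a, if_neg (by omega)]; rfl
        · intro s hs; rw [R.cA_g]; rfl
      rw [this]; rfl
    rw [hx, map_zero, z, mul_zero, zero_add, if_pos (by omega), show n^2-1-(r-1) = n^2-r by omega] at this
    exact (mul_eq_zero.1 this.symm).resolve_left (pow_ne_zero _ hp)
  have g : ∀ s, s < n^2 → R.cG H s x = 0 := by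
    intro s hs
    rcases Nat.eq_zero_or_pos s with rfl | h0
    · exact g2
    · by_cases h : s = n^2 - r
      · rw [h]; exact g3
      · exact g1 s h0 hs h
  have a1 : ∀ s, 0 < s → s < n^2 → s ≠ r → R.cA H s x = 0 := by
    intro s h0 hs hne
    have := R.cA_F H (t := s-1) (by omega) x
    rw [hx, map_zero, Nat.sub_add_cancel h0, g _ (by omega), mul_zero, add_zero] at this
    exact (mul_eq_zero.1 this.symm).resolve_left (ccA_ne H h1 h2 h0 hs hne)
  refine ⟨R.cA H 0 x, R.cA H r x, ?_⟩
  rw [← sub_eq_zero]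
  apply R.coord H
  · intro s hs
    rw [map_sub, map_add, map_smul (R.cA H s), map_smul (R.cA H s)]
    have c0 := R.cA_a H s 0
    rw [pow_zero, one_smul] at c0
    rw [c0, R.cA_a]
    rcases Nat.eq_zero_or_pos s with rfl | h0
    · rw [if_pos (by omega), if_neg (by omega)]; simp
    · by_cases h : s = r
      · subst h; rw [if_neg (by omega), if_pos (by omega)]; simp
      · rw [if_neg (by omega), if_neg (by omega), a1 s h0 hs h]; simp
  · intro s hs
    rw [map_sub, map_add, map_smul (R.cG H s), map_smul (R.cG H s)]
    have c0 := R.cG_a H s 0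
    rw [pow_zero, one_smul] at c0
    rw [c0, R.cG_a, g s hs]; simp

theorem IsP.Z_Er (R : IsP n q r σ α γ) (H : Hyp n q) : Zq k n q • (E k n q ^ r • α) = σ • (E k n q ^ r • α) := by
  rw [R.ZEa H, R.hr.neg_one_pow]; simp

theorem IsP.Z_Er' (R : IsP n q r σ α γ) (H : Hyp n q) (h : r + r' = n^2) : Zq k n q • (E k n q ^ r' • γ) = (-σ) • (E k n q ^ r' • γ) := by
  have : Odd r' := by
    have := H.Neven
    obtain ⟨a, ha⟩ := R.hr
    exact ⟨n^2/2 - a - 1, by have := R.hrN; omega⟩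
  rw [R.ZEg H, this.neg_one_pow]; simp

/-- vectors in the kernel of `F` with given sign -/
theorem IsP.kerF1 (R : IsP n q r σ α γ) (H : Hyp n q) {x : V} (hx : F k n q • x = 0) (hz : Zq k n q • x = σ • x) :
    ∃ b : k, x = b • (E k n q ^ r • α) := by
  obtain ⟨a, b, h⟩ := R.kerF H hx
  have := par_sep R.hσ R.Za (R.Z_Er H) hz h
  exact ⟨b, by rw [h, this, zero_add]⟩
theorem IsP.kerF2 (R : IsP n q r σ α γ) (H : Hyp n q) {x : V} (hx : F k n q • x = 0) (hz : Zq k n q • x = (-σ) • x) :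
    ∃ a : k, x = a • α := by
  obtain ⟨a, b, h⟩ := R.kerF H hx
  rw [add_comm] at h
  have := par_sep (neg_ne_zero.2 R.hσ) (by rw [neg_neg]; exact R.Z_Er H) R.Za hz h
  exact ⟨a, by rw [h, this, zero_add]⟩

theorem IsP.endo (R : IsP n q r σ α γ) (H : Hyp n q) (f : V →ₗ[U k n q] V) :
    ∃ a d : k, f γ = a • γ + d • (E k n q ^ r • α) := by
  have k1 : ∀ (c : k) (u : U k n q) (x : V), u • c • x = c • u • x := fun c u x => smul_comm u c x
  have hk : ∀ (c : k) x, f (c • x) = c • f x := fun c x => by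
    rw [← algebraMap_smul (U k n q) c x, map_smul, algebraMap_smul]
  obtain ⟨a, ha⟩ := R.kerF2 H (x := f α) (by rw [← map_smul, R.Fa, map_zero]) (by rw [← map_smul f, R.Za, hk])
  obtain ⟨d, hd⟩ := R.kerF1 H (x := f γ - a • γ)
    (by rw [smul_sub, ← map_smul f, R.Fg, map_smul f, ha, k1, k1, R.Fg, sub_self])
    (by rw [smul_sub, ← map_smul f, R.Zg, hk, k1, R.Zg, smul_sub, smul_comm a])
  exact ⟨a, d, by rw [← hd]; abel⟩

theorem IsP.FEr (R : IsP n q r' (-σ) α' γ') (H : Hyp n q) (h : r + r' = n^2) :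
    F k n q • (E k n q ^ r • γ') = (q⁻¹) ^ r • (E k n q ^ (n^2-1) • α') := by
  have h1 := R.hr1
  have h2 := ccB_zero H R.hrN
  rw [show n^2 - r' = r by omega] at h2
  rw [R.FEg H, h2, zero_smul, add_zero, show r + (r'-1) = n^2-1 by omega]

theorem IsP.homo (R : IsP n q r σ α γ) (R' : IsP n q r' (-σ) α' γ') (H : Hyp n q) (h : r + r' = n^2) (f : V →ₗ[U k n q] V') :
    ∃ a d : k, f γ = a • (E k n q ^ r • γ') + d • α' := by
  have k1 : ∀ (c : k) (u : U k n q) (x : V'), u • c • x = c • u • x := fun c u x => smul_comm u c x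
  have hk : ∀ (c : k) x, f (c • x) = c • f x := fun c x => by
    rw [← algebraMap_smul (U k n q) c x, map_smul, algebraMap_smul]
  have h1 := R.hr1
  have hq0 := H.q0
  obtain ⟨a, ha⟩ := R'.kerF1 H (x := f α) (by rw [← map_smul, R.Fa, map_zero]) (by rw [← map_smul f, R.Za, hk])
  have hZ := R'.Z_Er' H (r' := r) (by omega)
  rw [neg_neg] at hZ
  obtain ⟨d, hd⟩ := R'.kerF2 H (x := f γ - (a * q ^ r) • (E k n q ^ r • γ'))
    (by rw [smul_sub, ← map_smul f, R.Fg, map_smul f, ha, k1, k1, R'.FEr H h, E_pow_smul, smul_smul, mul_assoc, ← mul_pow,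
          mul_inv_cancel₀ hq0, one_pow, mul_one, show r - 1 + r' = n^2-1 by omega, sub_self])
    (by rw [neg_neg, smul_sub, ← map_smul f, R.Zg, hk, k1, hZ, smul_sub, smul_comm (a * q ^ r)])
  exact ⟨a * q ^ r, d, by rw [← hd]; abel⟩

theorem pow_rr (H : Hyp n q) (h : r + r' = n^2) : (q⁻¹) ^ r * (q⁻¹) ^ r' = 1 := by
  rw [← pow_add, h, H.hq.inv.pow_eq_one]

theorem IsP.exX (R : IsP n q r σ α γ) (R' : IsP n q r' (-σ) α' γ') (H : Hyp n q) (h : r + r' = n^2) :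
    ∃ f : V →ₗ[U k n q] V', f α = (q⁻¹) ^ r • (E k n q ^ r' • α') ∧ f γ = E k n q ^ r • γ' := by
  have k1 : ∀ (c : k) (u : U k n q) (x : V'), u • c • x = c • u • x := fun c u x => smul_comm u c x
  have h1 := R.hr1
  have h1' := R'.hr1
  have hq0 := H.q0
  have hp := pow_rr H h
  have hZ := R'.Z_Er' H (r' := r) (by omega)
  rw [neg_neg] at hZ
  apply R.hom H
  constructor
  · rw [k1, R'.FEa H, ccA_zero H, zero_smul, smul_zero]
  · rw [R'.FEr H h, k1, E_pow_smul, show r - 1 + r' = n^2-1 by omega]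
  · rw [k1, R'.LEa H, smul_comm]
    congr 1
    obtain ⟨s, rfl⟩ := Nat.exists_eq_add_of_le h1
    obtain ⟨s', rfl⟩ := Nat.exists_eq_add_of_le h1'
    have e : ((q⁻¹)^2) ^ (1 + s') * q ^ (1 + s' - 1) = q ^ (1 + s - 1) * ((q⁻¹) ^ (1 + s) * (q⁻¹) ^ (1 + s')) := by
      rw [Nat.add_sub_cancel_left, Nat.add_sub_cancel_left]
      simp only [inv_pow]
      field_simp
      ring
    rw [e, hp, mul_one]
  · rw [R'.LEg H]
    congr 1
    have e : ((q⁻¹)^2) ^ r * (q⁻¹) ^ (r'+1) = (q⁻¹) ^ (r+1) * ((q⁻¹) ^ r * (q⁻¹) ^ r') := by ring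
    rw [e, hp, mul_one]
  · rw [k1, R'.Z_Er H, smul_comm]
  · exact hZ

theorem IsP.exY (R : IsP n q r σ α γ) (R' : IsP n q r' (-σ) α' γ') (H : Hyp n q) (h : r + r' = n^2) :
    ∃ f : V →ₗ[U k n q] V', f α = 0 ∧ f γ = α' := by
  have h1' := R'.hr1
  have hq0 := H.q0
  have hp := pow_rr H h
  apply R.hom H
  constructor
  · rw [smul_zero]
  · rw [R'.Fa, smul_zero]
  · rw [smul_zero, smul_zero]
  · rw [R'.La]
    congr 1
    obtain ⟨s', rfl⟩ := Nat.exists_eq_add_of_le h1'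
    have e : (q⁻¹) ^ (r+1) = q ^ (1 + s' - 1) * ((q⁻¹) ^ r * (q⁻¹) ^ (1 + s')) := by
      rw [Nat.add_sub_cancel_left, ← mul_pow_sub_one (n := r+1) (by omega)]
      simp only [inv_pow, Nat.add_sub_cancel]
      field_simp
      ring
    rw [e, hp, mul_one]
  · rw [smul_zero, smul_zero]
  · rw [R'.Za, neg_neg]

end P5
end QFL
set_option linter.unusedSectionVars false
namespace QFL
section P6
variable {k : Type} [Field k] [CharZero k] {n : ℕ} {q : k}

/-- The eight monomials. -/
def mon8 {A : Type*} [Ring A] (g x y : A) : Fin 8 → A :=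
  ![1, x, y, x * y, g, x * g, y * g, x * y * g]

theorem mon8_span {A : Type*} [Ring A] [Algebra k A] {g x y : A} (x2 : x * x = 0) (y2 : y * y = 0) (g2 : g * g = 1)
    (gx : g * x = -(x * g)) (gy : g * y = -(y * g)) (xy : x * y = y * x)
    (S : Subalgebra k A) (hS : ∀ a, a ∈ S)
    (hmin : ∀ T : Subalgebra k A, g ∈ T → x ∈ T → y ∈ T → S ≤ T) (a : A) :
    a ∈ Submodule.span k (Set.range (mon8 g x y)) := by
  set W := Submodule.span k (Set.range (mon8 g x y)) with hW
  have w : ∀ i, mon8 g x y i ∈ W := fun i => Submodule.subset_span ⟨i, rfl⟩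
  have w0 : (1 : A) ∈ W := w 0
  have w1 : x ∈ W := w 1
  have w2 : y ∈ W := w 2
  have w3 : x * y ∈ W := w 3
  have w4 : g ∈ W := w 4
  have w5 : x * g ∈ W := w 5
  have w6 : y * g ∈ W := w 6
  have w7 : x * y * g ∈ W := w 7
  have x2' : ∀ z, x * (x * z) = 0 := fun z => by rw [← mul_assoc, x2, zero_mul]
  have y2' : ∀ z, y * (y * z) = 0 := fun z => by rw [← mul_assoc, y2, zero_mul]
  have g2' : ∀ z, g * (g * z) = z := fun z => by rw [← mul_assoc, g2, one_mul]
  have gx' : ∀ z, g * (x * z) = -(x * (g * z)) := fun z => by rw [← mul_assoc, gx, neg_mul, mul_assoc]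
  have gy' : ∀ z, g * (y * z) = -(y * (g * z)) := fun z => by rw [← mul_assoc, gy, neg_mul, mul_assoc]
  have yx' : ∀ z, y * (x * z) = x * (y * z) := fun z => by rw [← mul_assoc, ← xy, mul_assoc]
  rw [mul_assoc] at w7
  let T : Subalgebra k A :=
    { carrier := {a | ∀ z ∈ W, a * z ∈ W}
      mul_mem' := fun {a b} ha hb z hz => by rw [mul_assoc]; exact ha _ (hb _ hz)
      add_mem' := fun {a b} ha hb z hz => by rw [add_mul]; exact add_mem (ha _ hz) (hb _ hz)
      algebraMap_mem' := fun c z hz => by rw [← Algebra.smul_def]; exact W.smul_mem _ hz }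
  have key : ∀ b : A, (∀ i, b * mon8 g x y i ∈ W) → b ∈ T := by
    intro b hb z hz
    induction hz using Submodule.span_induction with
    | mem z hz => obtain ⟨i, rfl⟩ := hz; exact hb i
    | zero => rw [mul_zero]; exact zero_mem _
    | add u v _ _ hu hv => rw [mul_add]; exact add_mem hu hv
    | smul c u _ hu => rw [mul_smul_comm]; exact W.smul_mem _ hu
  have hT := hmin T
    (key g (by
      intro i
      fin_cases i <;> simp [mon8, mul_assoc, x2, y2, g2, gx, gy, x2', y2', g2', gx', gy', ← xy, yx', w0, w1, w2, w3, w4, w5, w6, w7]))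
    (key x (by
      intro i
      fin_cases i <;> simp [mon8, mul_assoc, x2, y2, g2, gx, gy, x2', y2', g2', gx', gy', ← xy, yx', w0, w1, w2, w3, w4, w5, w6, w7]))
    (key y (by
      intro i
      fin_cases i <;> simp [mon8, mul_assoc, x2, y2, g2, gx, gy, x2', y2', g2', gx', gy', ← xy, yx', w0, w1, w2, w3, w4, w5, w6, w7]))
  have := hT (hS a) 1 w0
  rwa [mul_one] at this

/-- generators of Lambda -/
def lam (k : Type) [Field k] (i : Fin 3) : Lambda k := RingQuot.mkAlgHom k (LambdaRel k) (FreeAlgebra.ι k i)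

theorem lam_span (a : Lambda k) : a ∈ Submodule.span k (Set.range (mon8 (lam k 0) (lam k 1) (lam k 2))) := by
  have R : ∀ {u v}, LambdaRel k u v → RingQuot.mkAlgHom k (LambdaRel k) u = RingQuot.mkAlgHom k (LambdaRel k) v :=
    fun h => RingQuot.mkAlgHom_rel k h
  refine mon8_span (by simpa [lam, pow_two] using R .x2) (by simpa [lam, pow_two] using R .y2) (by simpa [lam, pow_two] using R .g2)
    (by simpa [lam] using R .gx) (by simpa [lam] using R .gy) (by simpa [lam] using R .xy) ⊤ (fun _ => trivial) ?_ a
  intro T h0 h1 h2 z _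
  obtain ⟨z, rfl⟩ := RingQuot.mkAlgHom_surjective k (LambdaRel k) z
  induction z using FreeAlgebra.induction with
  | grade0 r => rw [AlgHom.commutes]; exact T.algebraMap_mem r
  | grade1 i => fin_cases i; exacts [h0, h1, h2]
  | mul a b ha hb => rw [map_mul]; exact mul_mem (ha trivial) (hb trivial)
  | add a b ha hb => rw [map_add]; exact add_mem (ha trivial) (hb trivial)

theorem lam_equiv {A : Type*} [Ring A] [Algebra k A] {g x y : A} (x2 : x * x = 0) (y2 : y * y = 0) (g2 : g * g = 1)
    (gx : g * x = -(x * g)) (gy : g * y = -(y * g)) (xy : x * y = y * x)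
    (inj : ∀ c : Fin 8 → k, ∑ i, c i • mon8 g x y i = 0 → c = 0)
    (sur : ∀ a : A, ∃ c : Fin 8 → k, a = ∑ i, c i • mon8 g x y i) : Nonempty (A ≃ₐ[k] Lambda k) := by
  let φ0 : FreeAlgebra k (Fin 3) →ₐ[k] A := FreeAlgebra.lift k ![g, x, y]
  let φ : Lambda k →ₐ[k] A := RingQuot.liftAlgHom k ⟨φ0, by
    intro u v h
    cases h <;> simp [φ0, pow_two, x2, y2, g2, gx, gy, xy]⟩
  have hφ : ∀ i, φ (lam k i) = ![g, x, y] i := by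
    intro i
    rw [lam, RingQuot.liftAlgHom_mkAlgHom_apply]; simp [φ0]
  have e0 : φ (lam k 0) = g := hφ 0
  have e1 : φ (lam k 1) = x := hφ 1
  have e2 : φ (lam k 2) = y := hφ 2
  have hm : ∀ i, φ (mon8 (lam k 0) (lam k 1) (lam k 2) i) = mon8 g x y i := by
    intro i
    fin_cases i <;> simp [mon8, e0, e1, e2]
  have hs : ∀ c : Fin 8 → k, φ (∑ i, c i • mon8 (lam k 0) (lam k 1) (lam k 2) i) = ∑ i, c i • mon8 g x y i := by
    intro c; simp only [map_sum, map_smul, hm]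
  refine ⟨(AlgEquiv.ofBijective φ ⟨?_, ?_⟩).symm⟩
  · rw [injective_iff_map_eq_zero]
    intro z hz
    obtain ⟨c, rfl⟩ := (Submodule.mem_span_range_iff_exists_fun k).1 (lam_span z)
    rw [hs] at hz
    simp [inj c hz]
  · intro a
    obtain ⟨c, rfl⟩ := sur a
    exact ⟨_, hs c⟩

variable {V V' : Type*} [AddCommGroup V] [Module k V] [Module (U k n q) V] [IsScalarTower k (U k n q) V]
  [AddCommGroup V'] [Module k V'] [Module (U k n q) V'] [IsScalarTower k (U k n q) V']
variable {r r' : ℕ} {σ : k} {α γ : V} {α' γ' : V'}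

theorem IsP.ind (R : IsP n q r σ α γ) (H : Hyp n q) {s t : ℕ} (hs : s < n^2) (ht : t < n^2) {a d : k}
    (h : a • (E k n q ^ s • γ) + d • (E k n q ^ t • α) = 0) : a = 0 ∧ d = 0 := by
  have h1 := congrArg (R.cG H s) h
  have h2 := congrArg (R.cA H t) h
  rw [map_add, map_smul (R.cG H s), map_smul (R.cG H s), R.cG_g, R.cG_a, if_pos ⟨rfl, hs⟩, map_zero] at h1
  rw [map_add, map_smul (R.cA H t), map_smul (R.cA H t), R.cA_g, R.cA_a, if_pos ⟨rfl, ht⟩, map_zero] at h2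
  constructor
  · simpa using h1
  · simpa using h2

theorem klin (f : V →ₗ[U k n q] V') (c : k) (x : V) : f (c • x) = c • f x := by
  rw [← algebraMap_smul (U k n q) c x, map_smul, algebraMap_smul]

theorem end_ext {X : Type*} [AddCommGroup X] [Module (U k n q) X] (t : ∀ v : V, ∃ u : U k n q, v = u • γ)
    (t' : ∀ v : V', ∃ u : U k n q, v = u • γ') {f g : V × V' →ₗ[U k n q] X} (h1 : f (γ, 0) = g (γ, 0))
    (h2 : f (0, γ') = g (0, γ')) : f = g := by
  ext v
  · obtain ⟨u, rfl⟩ := t v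
    have : ((u • γ, 0) : V × V') = u • (γ, 0) := by simp
    simp [this, h1]
  · obtain ⟨u, rfl⟩ := t' v
    have : ((0, u • γ') : V × V') = u • (0, γ') := by simp
    simp [this, h2]

theorem IsP.main (R : IsP n q r σ α γ) (R' : IsP n q r' (-σ) α' γ') (H : Hyp n q) (h : r + r' = n^2) :
    Nonempty (Module.End (U k n q) (V × V') ≃ₐ[k] Lambda k) := by
  have R'' : IsP n q r (-(-σ)) α γ := by rw [neg_neg]; exact R
  have hp := pow_rr H h
  have hr := R.hr1
  have hr' := R'.hr1
  set p := (q⁻¹) ^ r with hpd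
  set p' := (q⁻¹) ^ r' with hpd'
  have hp0 : p ≠ 0 := left_ne_zero_of_mul_eq_one hp
  obtain ⟨X1, X1a, X1g⟩ := R.exX R' H h
  obtain ⟨X2, X2a, X2g⟩ := R'.exX R'' H (by omega)
  rw [← hpd] at X1a
  rw [← hpd'] at X2a
  obtain ⟨Y1, Y1a, Y1g⟩ := R.exY R' H h
  obtain ⟨Y2, Y2a, Y2g⟩ := R'.exY R'' H (by omega)
  have k1 : ∀ (c : k) (u : U k n q) (x : V), u • c • x = c • u • x := fun c u x => smul_comm u c x
  have k2 : ∀ (c : k) (u : U k n q) (x : V'), u • c • x = c • u • x := fun c u x => smul_comm u c x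
  let g : Module.End (U k n q) (V × V') := LinearMap.prodMap LinearMap.id (-LinearMap.id)
  let x : Module.End (U k n q) (V × V') :=
    LinearMap.prod (p • (X2 ∘ₗ LinearMap.snd (U k n q) V V')) (X1 ∘ₗ LinearMap.fst (U k n q) V V')
  let y : Module.End (U k n q) (V × V') :=
    LinearMap.prod (Y2 ∘ₗ LinearMap.snd (U k n q) V V') (Y1 ∘ₗ LinearMap.fst (U k n q) V V')
  have gE : ∀ v w, g (v, w) = (v, -w) := fun v w => rfl
  have xE : ∀ v w, x (v, w) = (p • X2 w, X1 v) := fun v w => rfl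
  have yE : ∀ v w, y (v, w) = (Y2 w, Y1 v) := fun v w => rfl
  have z1 : E k n q ^ r • E k n q ^ r' • γ = 0 := by rw [E_pow_smul, E_big]; omega
  have z2 : E k n q ^ r' • E k n q ^ r • γ' = 0 := by rw [E_pow_smul, E_big]; omega
  have xx : x * x = 0 := by
    apply end_ext R.top R'.top
    · simp [Module.End.mul_apply, xE, X1g, X2g, z1]
    · simp [Module.End.mul_apply, xE, X1g, X2g, klin, z2]
  have yy : y * y = 0 := by
    apply end_ext R.top R'.top
    · simp [Module.End.mul_apply, yE, Y1g, Y2a]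
    · simp [Module.End.mul_apply, yE, Y2g, Y1a]
  have gg : g * g = 1 := by
    apply end_ext R.top R'.top
    · simp [Module.End.mul_apply, gE]
    · simp [Module.End.mul_apply, gE]
  have gx : g * x = -(x * g) := by
    apply end_ext R.top R'.top
    · simp [Module.End.mul_apply, gE, xE]
    · simp [Module.End.mul_apply, gE, xE]
  have gy : g * y = -(y * g) := by
    apply end_ext R.top R'.top
    · simp [Module.End.mul_apply, gE, yE]
    · simp [Module.End.mul_apply, gE, yE]
  have xy1 : x (y (γ, 0)) = (E k n q ^ r • α, 0) := by
    simp [xE, yE, Y1g, X2a, smul_smul, hp]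
  have xy2 : x (y (0, γ')) = (0, p • (E k n q ^ r' • α')) := by
    simp [xE, yE, Y2g, X1a]
  have xy : x * y = y * x := by
    apply end_ext R.top R'.top
    · rw [Module.End.mul_apply, Module.End.mul_apply, xy1]; simp [xE, yE, X1g, Y2g]
    · rw [Module.End.mul_apply, Module.End.mul_apply, xy2]; simp [xE, yE, X2g, Y1g, klin]
  have S1 : ∀ c : Fin 8 → k, (∑ i, c i • mon8 g x y i) (γ, 0) =
      ((c 0 + c 4) • γ + (c 3 + c 7) • (E k n q ^ r • α), (c 1 + c 5) • (E k n q ^ r • γ') + (c 2 + c 6) • α') := by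
    intro c
    simp only [Fin.sum_univ_eight, LinearMap.add_apply, LinearMap.smul_apply]
    change c 0 • (γ, 0) + c 1 • x (γ, 0) + c 2 • y (γ, 0) + c 3 • x (y (γ, 0)) + c 4 • g (γ, 0) + c 5 • x (g (γ, 0)) +
      c 6 • y (g (γ, 0)) + c 7 • x (y (g (γ, 0))) = _
    rw [gE, neg_zero, xy1, xE, yE, X1g, Y1g]
    simp only [map_zero, smul_zero, Prod.smul_mk, Prod.mk_add_mk, add_zero, zero_add, add_smul]
    congr 1 <;> abel
  have S2 : ∀ c : Fin 8 → k, (∑ i, c i • mon8 g x y i) (0, γ') =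
      (((c 1 - c 5) * p) • (E k n q ^ r' • γ) + (c 2 - c 6) • α, (c 0 - c 4) • γ' + ((c 3 - c 7) * p) • (E k n q ^ r' • α')) := by
    intro c
    simp only [Fin.sum_univ_eight, LinearMap.add_apply, LinearMap.smul_apply]
    change c 0 • (0, γ') + c 1 • x (0, γ') + c 2 • y (0, γ') + c 3 • x (y (0, γ')) + c 4 • g (0, γ') + c 5 • x (g (0, γ')) +
      c 6 • y (g (0, γ')) + c 7 • x (y (g (0, γ'))) = _
    have : g (0, γ') = -(0, γ') := by rw [gE]; simp
    rw [this, map_neg, map_neg, map_neg, xy2, xE, yE, X2g, Y2g]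
    simp only [map_zero, smul_zero, Prod.neg_mk, neg_zero, smul_neg, Prod.smul_mk, Prod.mk_add_mk, add_zero, zero_add, sub_smul, sub_mul,
      smul_smul]
    congr 1 <;> abel
  refine lam_equiv xx yy gg gx gy xy ?_ ?_
  · intro c hc
    have h1 := S1 c
    have h2 := S2 c
    rw [hc] at h1 h2
    have hN := R.hrN
    have hN' := R'.hrN
    have a1 := R.ind H (s := 0) (t := r) (a := c 0 + c 4) (d := c 3 + c 7) (by omega) hN
      (by rw [pow_zero, one_smul]; exact (congrArg Prod.fst h1).symm)
    have a2 := R'.ind H (s := r) (t := 0) (a := c 1 + c 5) (d := c 2 + c 6) hN (by omega)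
      (by rw [pow_zero, one_smul]; exact (congrArg Prod.snd h1).symm)
    have a3 := R.ind H (s := r') (t := 0) (a := (c 1 - c 5) * p) (d := c 2 - c 6) hN' (by omega)
      (by rw [pow_zero, one_smul]; exact (congrArg Prod.fst h2).symm)
    have a4 := R'.ind H (s := 0) (t := r') (a := c 0 - c 4) (d := (c 3 - c 7) * p) (by omega) hN'
      (by rw [pow_zero, one_smul]; exact (congrArg Prod.snd h2).symm)
    have b1 := (mul_eq_zero.1 a3.1).resolve_right hp0
    have b2 := (mul_eq_zero.1 a4.2).resolve_right hp0
    have key : ∀ a b : k, a + b = 0 → a - b = 0 → a = 0 ∧ b = 0 := by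
      intro a b h1 h2
      have h3 : (2 : k) * a = 0 := by linear_combination h1 + h2
      have ha := (mul_eq_zero.1 h3).resolve_left two_ne_zero
      exact ⟨ha, by rw [ha, zero_add] at h1; exact h1⟩
    have f0 := key _ _ a1.1 a4.1
    have f1 := key _ _ a2.1 b1
    have f2 := key _ _ a2.2 a3.2
    have f3 := key _ _ a1.2 b2
    funext i
    fin_cases i
    exacts [f0.1, f1.1, f2.1, f3.1, f0.2, f1.2, f2.2, f3.2]
  · intro φ
    obtain ⟨a, d, e1⟩ := R.endo H (LinearMap.fst _ _ _ ∘ₗ φ ∘ₗ LinearMap.inl _ _ _)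
    obtain ⟨b, f, e2⟩ := R.homo R' H h (LinearMap.snd _ _ _ ∘ₗ φ ∘ₗ LinearMap.inl _ _ _)
    obtain ⟨b', f', e3⟩ := R'.homo R'' H (by omega) (LinearMap.fst _ _ _ ∘ₗ φ ∘ₗ LinearMap.inr _ _ _)
    obtain ⟨a', d', e4⟩ := R'.endo H (LinearMap.snd _ _ _ ∘ₗ φ ∘ₗ LinearMap.inr _ _ _)
    have q1 : φ (γ, 0) = (a • γ + d • (E k n q ^ r • α), b • (E k n q ^ r • γ') + f • α') := Prod.ext e1 e2
    have q2 : φ (0, γ') = (b' • (E k n q ^ r' • γ) + f' • α, a' • γ' + d' • (E k n q ^ r' • α')) := Prod.ext e3 e4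
    have t1 : ∀ u v : k, (u + v) / 2 + (u - v) / 2 = u := fun u v => by field_simp; ring
    have t2 : ∀ u v : k, (u + v) / 2 - (u - v) / 2 = v := fun u v => by field_simp; ring
    refine ⟨![(a+a')/2, (b+b'/p)/2, (f+f')/2, (d+d'/p)/2, (a-a')/2, (b-b'/p)/2, (f-f')/2, (d-d'/p)/2], ?_⟩
    apply end_ext R.top R'.top
    · rw [S1, q1]
      change _ = (((a+a')/2 + (a-a')/2) • γ + ((d+d'/p)/2 + (d-d'/p)/2) • (E k n q ^ r • α),
        ((b+b'/p)/2 + (b-b'/p)/2) • (E k n q ^ r • γ') + ((f+f')/2+(f-f')/2) • α')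
      rw [t1, t1, t1, t1]
    · rw [S2, q2]
      change _ = ((((b+b'/p)/2 - (b-b'/p)/2)*p) • (E k n q ^ r' • γ) + ((f+f')/2-(f-f')/2) • α,
        ((a+a')/2 - (a-a')/2) • γ' + (((d+d'/p)/2 - (d-d'/p)/2)*p) • (E k n q ^ r' • α'))
      rw [t2, t2, t2, t2, div_mul_cancel₀ _ hp0, div_mul_cancel₀ _ hp0]

theorem rels_P (H : Hyp n q) {i : ℕ} (h1 : 1 ≤ i) (hi : i ≤ n^2/2) (j : ℕ) :
    Rels n q (2*i-1) (sg k j) (alpha k n q i j) (gam k n q i j) where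
  Fa := F_alpha H i j
  Fg := by rw [show 2*i-1-1 = 2*i-2 by omega]; exact (gam_spec H hi h1 j).2
  La := by rw [show 2*i-1-1 = 2*i-2 by omega]; exact L_alpha H h1 j
  Lg := by rw [show 2*i-1+1 = 2*i by omega]; exact L_gam H hi h1 j
  Za := Z_alpha H i j
  Zg := Z_gam H hi h1 j

theorem alpha_mem (H : Hyp n q) {i : ℕ} (h1 : 1 ≤ i) (hi : i ≤ n^2/2) (j : ℕ) : alpha k n q i j ∈ P k n q i j := by
  have R := rels_P H h1 hi j
  have hN : 0 < n^2/2 := by omega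
  have hg : gam k n q i j ∈ P k n q i j := Submodule.subset_span rfl
  have : ∀ t, t ≤ 2*i-2 → E k n q ^ (2*i-2-t) • alpha k n q i j ∈ P k n q i j := by
    intro t
    induction t with
    | zero =>
      intro _
      have := (P k n q i j).smul_mem (F k n q) hg
      rw [R.Fg] at this
      exact this
    | succ t ih =>
      intro ht
      have h2 := (P k n q i j).smul_mem (F k n q) (ih (by omega))
      rw [R.FEa H] at h2
      have hne := ccA_ne H (r := 2*i-1) (s := 2*i-2-t) (by omega) (by omega) (by omega) (by omega) (by omega)
      have h3 := (P k n q i j).smul_of_tower_mem (cc q (q ^ (2*i-1-1)) (2*i-2-t))⁻¹ h2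
      rw [smul_smul, inv_mul_cancel₀ hne, one_smul] at h3
      exact h3
  have h0 := this (2*i-2) le_rfl
  rwa [Nat.sub_self, pow_zero, one_smul] at h0

theorem isP_P (H : Hyp n q) {i : ℕ} (h1 : 1 ≤ i) (hi : i ≤ n^2/2) (j : ℕ) :
    IsP n q (2*i-1) (sg k j) (⟨alpha k n q i j, alpha_mem H h1 hi j⟩ : P k n q i j)
      ⟨gam k n q i j, Submodule.subset_span rfl⟩ where
  Fa := Subtype.ext (rels_P H h1 hi j).Fa
  Fg := Subtype.ext (rels_P H h1 hi j).Fg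
  La := Subtype.ext (rels_P H h1 hi j).La
  Lg := Subtype.ext (rels_P H h1 hi j).Lg
  Za := Subtype.ext (rels_P H h1 hi j).Za
  Zg := Subtype.ext (rels_P H h1 hi j).Zg
  hr1 := by omega
  hrN := by omega
  hr := ⟨i-1, by omega⟩
  hσ := by
    intro h
    have := sg_sq (k := k) j
    rw [h] at this
    simp at this
  top := by
    rintro ⟨v, hv⟩
    obtain ⟨u, hu⟩ := Submodule.mem_span_singleton.1 hv
    exact ⟨u, Subtype.ext hu.symm⟩
  am := by
    obtain ⟨u, hu⟩ := Submodule.mem_span_singleton.1 (alpha_mem H h1 hi j)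
    exact ⟨u, Subtype.ext hu.symm⟩
  ne := by
    intro h
    exact E_alpha_ne H i j (congrArg Subtype.val h)

theorem final (H : Hyp n q) {i : ℕ} (h1 : 1 ≤ i) (hi : i ≤ n^2/2) :
    Nonempty ((Module.End (U k n q)
          ((P k n q i 0) × (P k n q (n ^ 2 / 2 - i + 1) 1))) ≃ₐ[k] Lambda k) := by
  have R1 := isP_P H h1 hi 0
  have R2 := isP_P H (i := n^2/2-i+1) (by omega) (by omega) 1
  have hs : sg k 1 = -sg k 0 := by simp [sg]
  rw [hs] at R2
  have := H.Neven
  exact R1.main R2 H (by omega)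

end P6
end QFL
open QFL in
/-- The basic algebra of each block: `End_u(P_{2i,0} ⊕ P_{n²-2i+2,1}) ≅ Λ` as `k`-algebras. -/
theorem statement13 (k : Type) [Field k] [IsAlgClosed k] [CharZero k]
    (n : ℕ) (hn : 0 < n) (h4 : 4 ∣ n) (q : k) (hq : IsPrimitiveRoot q (n ^ 2)) :
    ∀ i : ℕ, 1 ≤ i → i ≤ n ^ 2 / 2 →
      Nonempty ((Module.End (U k n q)
          ((P k n q i 0) × (P k n q (n ^ 2 / 2 - i + 1) 1))) ≃ₐ[k] Lambda k) := by
  exact fun i h1 hi => final ⟨hn, h4, hq⟩ h1 hi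
end
end

section
/- Let l ≥ 2 be an integer, ζ ∈ k a primitive l-th root of unity, and m a positive integer with gcd(m,l) = 1. Then the book algebra h(ζ,m) := k⟨y,x,g⟩/(x^l, y^l, g^l−1, gx−ζxg, gy−ζ^m yg, xy−yx) admits a Hopf algebra structure over k whose comultiplication, counit and antipode satisfy Δ(x) = x⊗g + 1⊗x, Δ(y) = y⊗1 + g^m⊗y, Δ(g) = g⊗g, ε(x) = ε(y) = 0, ε(g) = 1, S(x) = −xg^{-1}, S(y) = −g^{-m}y, S(g) = g^{-1}. -/
noncomputable section

open scoped TensorProduct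

namespace Book

/-- The defining relations of the book algebra `h(ζ,m)`:
generators `g = ι 0`, `x = ι 1`, `y = ι 2` with relations
`x^l = 0`, `y^l = 0`, `g^l = 1`, `gx = ζxg`, `gy = ζ^m yg`, `xy = yx`. -/
inductive BookRel (k : Type) [Field k] (l m : ℕ) (ζ : k) :
    FreeAlgebra k (Fin 3) → FreeAlgebra k (Fin 3) → Prop
  | xl : BookRel k l m ζ (FreeAlgebra.ι k (1 : Fin 3) ^ l) 0
  | yl : BookRel k l m ζ (FreeAlgebra.ι k (2 : Fin 3) ^ l) 0
  | gl : BookRel k l m ζ (FreeAlgebra.ι k (0 : Fin 3) ^ l) 1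
  | gx : BookRel k l m ζ (FreeAlgebra.ι k (0 : Fin 3) * FreeAlgebra.ι k (1 : Fin 3))
      (ζ • (FreeAlgebra.ι k (1 : Fin 3) * FreeAlgebra.ι k (0 : Fin 3)))
  | gy : BookRel k l m ζ (FreeAlgebra.ι k (0 : Fin 3) * FreeAlgebra.ι k (2 : Fin 3))
      (ζ ^ m • (FreeAlgebra.ι k (2 : Fin 3) * FreeAlgebra.ι k (0 : Fin 3)))
  | xy : BookRel k l m ζ (FreeAlgebra.ι k (1 : Fin 3) * FreeAlgebra.ι k (2 : Fin 3))
      (FreeAlgebra.ι k (2 : Fin 3) * FreeAlgebra.ι k (1 : Fin 3))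

/-- The book algebra `h(ζ,m)`. -/
abbrev H (k : Type) [Field k] (l m : ℕ) (ζ : k) := RingQuot (BookRel k l m ζ)

variable (k : Type) [Field k] (l m : ℕ) (ζ : k)

def g : H k l m ζ := RingQuot.mkAlgHom k (BookRel k l m ζ) (FreeAlgebra.ι k (0 : Fin 3))
def x : H k l m ζ := RingQuot.mkAlgHom k (BookRel k l m ζ) (FreeAlgebra.ι k (1 : Fin 3))
def y : H k l m ζ := RingQuot.mkAlgHom k (BookRel k l m ζ) (FreeAlgebra.ι k (2 : Fin 3))

end Book

section QBinom

/-- Gaussian binomial coefficients, by the Pascal recursion. -/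
def qb {k : Type} [Field k] (q : k) : ℕ → ℕ → k
  | _, 0 => 1
  | 0, _ + 1 => 0
  | n + 1, j + 1 => qb q n j + q ^ (j + 1) * qb q n (j + 1)

theorem qb_zero_right {k : Type} [Field k] (q : k) (n : ℕ) : qb q n 0 = 1 := by
  cases n <;> rfl

theorem qb_succ {k : Type} [Field k] (q : k) (n j : ℕ) :
    qb q (n + 1) (j + 1) = qb q n j + q ^ (j + 1) * qb q n (j + 1) := rfl

theorem qb_gt {k : Type} [Field k] (q : k) (n : ℕ) : ∀ j, n < j → qb q n j = 0 := by
  induction n with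
  | zero => intro j hj; cases j with
    | zero => omega
    | succ j => rfl
  | succ n ih => intro j hj; cases j with
    | zero => omega
    | succ j => rw [qb_succ, ih j (by omega), ih (j + 1) (by omega)]; simp

theorem qb_self {k : Type} [Field k] (q : k) (n : ℕ) : qb q n n = 1 := by
  induction n with
  | zero => rfl
  | succ n ih => rw [qb_succ, ih, qb_gt q n (n + 1) (by omega)]; simp

theorem qb_absorb {k : Type} [Field k] (q : k) (n : ℕ) :
    ∀ j, qb q (n + 1) (j + 1) * (q ^ (j + 1) - 1) = qb q n j * (q ^ (n + 1) - 1) := by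
  induction n with
  | zero => intro j; cases j with
    | zero => simp [qb]
    | succ j => simp [qb]
  | succ n ih =>
    intro j
    cases j with
    | zero =>
      have h := ih 0
      rw [qb_zero_right] at h ⊢
      rw [qb_succ, qb_zero_right]
      linear_combination q * h
    | succ j =>
      have h1 := ih j
      have h2 := ih (j + 1)
      have h3 := qb_succ q n j
      rw [qb_succ q (n + 1) (j + 1)]
      linear_combination q ^ (j + 2) * h2 + q * h1 - q * (q ^ (n + 1) - 1) * h3

theorem qb_vanish {k : Type} [Field k] (q : k) (l : ℕ) (hq : IsPrimitiveRoot q l) (j : ℕ)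
    (h0 : 0 < j) (hj : j < l) : qb q l j = 0 := by
  obtain ⟨n, rfl⟩ : ∃ n, l = n + 1 := ⟨l - 1, by omega⟩
  obtain ⟨i, rfl⟩ : ∃ i, j = i + 1 := ⟨j - 1, by omega⟩
  have h := qb_absorb q n i
  rw [hq.pow_eq_one, sub_self, mul_zero] at h
  rcases mul_eq_zero.1 h with h | h
  · exact h
  · exact absurd (sub_eq_zero.1 h) (hq.pow_ne_one_of_pos_of_lt (by omega) hj)

theorem qcomm_pow {k : Type} [Field k] {R : Type} [Semiring R] [Algebra k R] (q : k) (A B : R)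
    (h : B * A = q • (A * B)) (n : ℕ) : B * A ^ n = q ^ n • (A ^ n * B) := by
  induction n with
  | zero => simp
  | succ n ih =>
    rw [pow_succ, ← mul_assoc, ih, smul_mul_assoc, mul_assoc, h, mul_smul_comm, smul_smul,
      mul_assoc, pow_succ]

theorem qcomm_pow_left {k : Type} [Field k] {R : Type} [Semiring R] [Algebra k R] (q : k) (A B : R)
    (h : B * A = q • (A * B)) (n : ℕ) : B ^ n * A = q ^ n • (A * B ^ n) := by
  induction n with
  | zero => simp
  | succ n ih =>
    rw [pow_succ', mul_assoc, ih, mul_smul_comm, ← mul_assoc, h, smul_mul_assoc, smul_smul,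
      mul_assoc, pow_succ]

theorem qcomm_mul_pow {k : Type} [Field k] {R : Type} [Semiring R] [Algebra k R] (q : k) (A B : R)
    (h : B * A = q • (A * B)) (n : ℕ) : ∃ c : k, (A * B) ^ n = c • (A ^ n * B ^ n) := by
  induction n with
  | zero => exact ⟨1, by simp⟩
  | succ n ih =>
    obtain ⟨c, hc⟩ := ih
    refine ⟨c * q ^ n, ?_⟩
    rw [pow_succ, hc, smul_mul_assoc, mul_assoc, ← mul_assoc (B ^ n), qcomm_pow_left q A B h,
      smul_mul_assoc, mul_smul_comm, smul_smul, pow_succ, pow_succ]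
    simp only [mul_assoc]

theorem qbinom {k : Type} [Field k] {R : Type} [Semiring R] [Algebra k R] (q : k) (A B : R)
    (h : B * A = q • (A * B)) (n : ℕ) :
    (A + B) ^ n = ∑ j ∈ Finset.range (n + 1), qb q n j • (A ^ j * B ^ (n - j)) := by
  induction n with
  | zero => simp [qb]
  | succ n ih =>
    have e2 : B * (A + B) ^ n = ∑ j ∈ Finset.range (n + 2),
        (q ^ j * qb q n j) • (A ^ j * B ^ (n + 1 - j)) := by
      rw [Finset.sum_range_succ, qb_gt q n (n + 1) (by omega), mul_zero, zero_smul, add_zero,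
        ih, Finset.mul_sum]
      refine Finset.sum_congr rfl fun j hj => ?_
      have hj' : n + 1 - j = (n - j) + 1 := by have := Finset.mem_range.1 hj; omega
      rw [mul_smul_comm, ← mul_assoc, qcomm_pow q A B h, smul_mul_assoc, smul_smul, hj',
        pow_succ' B, mul_assoc, mul_comm]
    rw [pow_succ', add_mul, e2, Finset.sum_range_succ', Finset.sum_range_succ' _ (n + 1), ih,
      Finset.mul_sum, ← add_assoc, ← Finset.sum_add_distrib]
    congr 1
    · refine Finset.sum_congr rfl fun j hj => ?_
      rw [qb_succ, add_smul, mul_smul_comm, ← mul_assoc, ← pow_succ', Nat.add_sub_add_right]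
    · simp [qb_zero_right]

theorem qfrob {k : Type} [Field k] {R : Type} [Semiring R] [Algebra k R] (q : k) (l : ℕ) (hl : 0 < l)
    (hq : IsPrimitiveRoot q l) (A B : R)
    (h : B * A = q • (A * B)) (hA : A ^ l = 0) (hB : B ^ l = 0) : (A + B) ^ l = 0 := by
  rw [qbinom q A B h]
  refine Finset.sum_eq_zero fun j hj => ?_
  have hj' := Finset.mem_range.1 hj
  rcases Nat.eq_zero_or_pos j with rfl | h0
  · simp [hB]
  rcases Nat.lt_or_ge j l with h1 | h1
  · rw [qb_vanish q l hq j h0 h1, zero_smul]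
  · obtain rfl : j = l := by omega
    simp [hA]

end QBinom

namespace Book

section

variable (k : Type) [Field k] (l m : ℕ) (ζ : k)

theorem rel_xl : x k l m ζ ^ l = 0 := by
  have := RingQuot.mkAlgHom_rel k (BookRel.xl (k := k) (l := l) (m := m) (ζ := ζ))
  simpa [x] using this

theorem rel_yl : y k l m ζ ^ l = 0 := by
  have := RingQuot.mkAlgHom_rel k (BookRel.yl (k := k) (l := l) (m := m) (ζ := ζ))
  simpa [y] using this

theorem rel_gl : g k l m ζ ^ l = 1 := by
  have := RingQuot.mkAlgHom_rel k (BookRel.gl (k := k) (l := l) (m := m) (ζ := ζ))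
  simpa [g] using this

theorem rel_gx : g k l m ζ * x k l m ζ = ζ • (x k l m ζ * g k l m ζ) := by
  have := RingQuot.mkAlgHom_rel k (BookRel.gx (k := k) (l := l) (m := m) (ζ := ζ))
  simpa [g, x] using this

theorem rel_gy : g k l m ζ * y k l m ζ = ζ ^ m • (y k l m ζ * g k l m ζ) := by
  have := RingQuot.mkAlgHom_rel k (BookRel.gy (k := k) (l := l) (m := m) (ζ := ζ))
  simpa [g, y] using this

theorem rel_xy : x k l m ζ * y k l m ζ = y k l m ζ * x k l m ζ := by
  have := RingQuot.mkAlgHom_rel k (BookRel.xy (k := k) (l := l) (m := m) (ζ := ζ))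
  simpa [x, y] using this

theorem H_induction (P : H k l m ζ → Prop) (halg : ∀ r, P (algebraMap k _ r))
    (hadd : ∀ a b, P a → P b → P (a + b)) (hmul : ∀ a b, P a → P b → P (a * b))
    (hg : P (g k l m ζ)) (hx : P (x k l m ζ)) (hy : P (y k l m ζ)) (a : H k l m ζ) : P a := by
  obtain ⟨b, rfl⟩ := RingQuot.mkAlgHom_surjective k (BookRel k l m ζ) a
  induction b using FreeAlgebra.induction with
  | grade0 r => rw [AlgHom.commutes]; exact halg r
  | grade1 i =>
    fin_cases i
    · exact hg
    · exact hx
    · exact hy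
  | mul a b ha hb => rw [map_mul]; exact hmul _ _ ha hb
  | add a b ha hb => rw [map_add]; exact hadd _ _ ha hb

/-- The universal property of the book algebra. -/
theorem H_lift {A : Type} [Semiring A] [Algebra k A] (G X Y : A) (hX : X ^ l = 0) (hY : Y ^ l = 0)
    (hG : G ^ l = 1) (hGX : G * X = ζ • (X * G)) (hGY : G * Y = ζ ^ m • (Y * G))
    (hXY : X * Y = Y * X) :
    ∃ f : H k l m ζ →ₐ[k] A, f (g k l m ζ) = G ∧ f (x k l m ζ) = X ∧ f (y k l m ζ) = Y := by
  let φ : FreeAlgebra k (Fin 3) →ₐ[k] A := FreeAlgebra.lift k ![G, X, Y]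
  have h : ∀ ⦃a b⦄, BookRel k l m ζ a b → φ a = φ b := by
    intro a b hab
    cases hab <;> simp [φ, *]
  refine ⟨RingQuot.liftAlgHom k ⟨φ, h⟩, ?_, ?_, ?_⟩ <;>
  simp [g, x, y, φ]

theorem H_hom_ext {A : Type} [Semiring A] [Algebra k A] (f f' : H k l m ζ →ₐ[k] A)
    (hg : f (g k l m ζ) = f' (g k l m ζ)) (hx : f (x k l m ζ) = f' (x k l m ζ))
    (hy : f (y k l m ζ) = f' (y k l m ζ)) (a : H k l m ζ) : f a = f' a := by
  induction a using H_induction with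
  | halg r => simp
  | hadd a b ha hb => simp [ha, hb]
  | hmul a b ha hb => simp [ha, hb]
  | hg => exact hg
  | hx => exact hx
  | hy => exact hy

end

section Antipode

variable {k A : Type} [Field k] [Semiring A] [Algebra k A]

theorem mulS_left (S : A →ₗ[k] A) (hS : ∀ a b, S (a * b) = S b * S a) (u : A ⊗[k] A) (c d : A) :
    LinearMap.mul' k A (LinearMap.rTensor A S (u * (c ⊗ₜ d))) =
      S c * LinearMap.mul' k A (LinearMap.rTensor A S u) * d := by
  induction u with
  | zero => simp
  | tmul a b => simp [hS, mul_assoc]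
  | add u v hu hv => simp only [add_mul, map_add, hu, hv, mul_add]

theorem mulS_right (S : A →ₗ[k] A) (hS : ∀ a b, S (a * b) = S b * S a) (u : A ⊗[k] A) (c d : A) :
    LinearMap.mul' k A (LinearMap.lTensor A S ((c ⊗ₜ d) * u)) =
      c * LinearMap.mul' k A (LinearMap.lTensor A S u) * S d := by
  induction u with
  | zero => simp
  | tmul a b => simp [hS, mul_assoc]
  | add u v hu hv => simp only [add_mul, map_add, hu, hv, mul_add]

theorem mulS_left_law (S : A →ₗ[k] A) (hS : ∀ a b, S (a * b) = S b * S a) (u t : A ⊗[k] A) (e : k)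
    (h : LinearMap.mul' k A (LinearMap.rTensor A S u) = algebraMap k A e) :
    LinearMap.mul' k A (LinearMap.rTensor A S (u * t)) =
      algebraMap k A e * LinearMap.mul' k A (LinearMap.rTensor A S t) := by
  induction t with
  | zero => simp
  | tmul c d =>
    rw [mulS_left S hS, h, ← Algebra.commutes, mul_assoc]; simp
  | add u v hu hv => simp only [map_add, hu, hv, mul_add]

theorem mulS_right_law (S : A →ₗ[k] A) (hS : ∀ a b, S (a * b) = S b * S a) (u t : A ⊗[k] A) (e : k)
    (h : LinearMap.mul' k A (LinearMap.lTensor A S u) = algebraMap k A e) :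
    LinearMap.mul' k A (LinearMap.lTensor A S (t * u)) =
      LinearMap.mul' k A (LinearMap.lTensor A S t) * algebraMap k A e := by
  induction t with
  | zero => simp
  | tmul c d =>
    rw [mulS_right S hS, h, mul_assoc, Algebra.commutes, ← mul_assoc]; simp
  | add u v hu hv => simp only [map_add, hu, hv, add_mul]

end Antipode

theorem op_relations {k A : Type} [Field k] [Ring A] [Algebra k A] (l m : ℕ) (ζ : k)
    (g' x' y' G : A) (hgx : g' * x' = ζ • (x' * g')) (hgy : g' * y' = ζ ^ m • (y' * g'))
    (hxy : x' * y' = y' * x') (hX : x' ^ l = 0) (hY : y' ^ l = 0)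
    (hgG : g' * G = 1) (hGg : G * g' = 1) (hGl : G ^ l = 1) :
    (MulOpposite.op (-(x' * G))) ^ l = 0 ∧ (MulOpposite.op (-(G ^ m * y'))) ^ l = 0 ∧
    (MulOpposite.op G) ^ l = 1 ∧
    MulOpposite.op G * MulOpposite.op (-(x' * G)) =
      ζ • (MulOpposite.op (-(x' * G)) * MulOpposite.op G) ∧
    MulOpposite.op G * MulOpposite.op (-(G ^ m * y')) =
      ζ ^ m • (MulOpposite.op (-(G ^ m * y')) * MulOpposite.op G) ∧
    MulOpposite.op (-(x' * G)) * MulOpposite.op (-(G ^ m * y')) =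
      MulOpposite.op (-(G ^ m * y')) * MulOpposite.op (-(x' * G)) := by
  have hxG : x' * G = ζ • (G * x') := by
    calc x' * G = G * (g' * x') * G := by rw [← mul_assoc, hGg, one_mul]
      _ = ζ • (G * x' * (g' * G)) := by
        rw [hgx, mul_smul_comm, smul_mul_assoc]; simp only [mul_assoc]
      _ = _ := by rw [hgG, mul_one]
  have hyG : y' * G = ζ ^ m • (G * y') := by
    calc y' * G = G * (g' * y') * G := by rw [← mul_assoc, hGg, one_mul]
      _ = ζ ^ m • (G * y' * (g' * G)) := by
        rw [hgy, mul_smul_comm, smul_mul_assoc]; simp only [mul_assoc]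
      _ = _ := by rw [hgG, mul_one]
  have hxGm := qcomm_pow ζ _ _ hxG m
  have hyGm := qcomm_pow (ζ ^ m) _ _ hyG m
  refine ⟨?_, ?_, ?_, ?_, ?_, ?_⟩
  · apply MulOpposite.unop_injective
    rw [MulOpposite.unop_pow, MulOpposite.unop_op, MulOpposite.unop_zero, neg_pow, hxG, smul_pow]
    obtain ⟨c, hc⟩ := qcomm_mul_pow ζ _ _ hxG l
    rw [hc, hX]; simp
  · apply MulOpposite.unop_injective
    rw [MulOpposite.unop_pow, MulOpposite.unop_op, MulOpposite.unop_zero, neg_pow]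
    obtain ⟨c, hc⟩ := qcomm_mul_pow ((ζ ^ m) ^ m) _ _ hyGm l
    rw [hc, hY]; simp
  · rw [← MulOpposite.op_pow, hGl, MulOpposite.op_one]
  · rw [← MulOpposite.op_mul, ← MulOpposite.op_mul, ← MulOpposite.op_smul]
    congr 1
    rw [neg_mul, mul_neg, smul_neg, ← mul_assoc, ← smul_mul_assoc, ← hxG]
  · rw [← MulOpposite.op_mul, ← MulOpposite.op_mul, ← MulOpposite.op_smul]
    congr 1
    rw [neg_mul, mul_neg, smul_neg, mul_assoc, hyG, mul_smul_comm, ← mul_assoc, ← mul_assoc,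
      ← pow_succ, ← pow_succ']
  · rw [← MulOpposite.op_mul, ← MulOpposite.op_mul]
    congr 1
    rw [neg_mul_neg, neg_mul_neg]
    calc G ^ m * y' * (x' * G) = G ^ m * x' * (y' * G) := by
          rw [mul_assoc, ← mul_assoc y', ← hxy]; simp only [mul_assoc]
      _ = (ζ ^ m • (G ^ m * x')) * (G * y') := by
          rw [hyG, mul_smul_comm, smul_mul_assoc]
      _ = x' * (G ^ m * G) * y' := by rw [← hxGm]; simp only [mul_assoc]
      _ = _ := by rw [← pow_succ, pow_succ']; simp only [mul_assoc]

theorem anti_x {A : Type} [Ring A] (x' G g' : A) (h : G * g' = 1) : -(x' * G) * g' + x' = 0 := by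
  rw [neg_mul, mul_assoc, h, mul_one, neg_add_cancel]

theorem anti_y {A : Type} [Ring A] (y' G g' : A) (h : g' * G = 1) : y' + g' * -(G * y') = 0 := by
  rw [mul_neg, ← mul_assoc, h, one_mul, add_neg_cancel]

section Maps

variable (k : Type) [Field k] (l m : ℕ) (ζ : k)

theorem exists_comul (hl : 2 ≤ l) (hgcd : Nat.gcd m l = 1) (hζ : IsPrimitiveRoot ζ l) :
    ∃ f : H k l m ζ →ₐ[k] (H k l m ζ ⊗[k] H k l m ζ),
      f (g k l m ζ) = g k l m ζ ⊗ₜ[k] g k l m ζ ∧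
      f (x k l m ζ) = (x k l m ζ ⊗ₜ[k] g k l m ζ) + ((1 : H k l m ζ) ⊗ₜ[k] x k l m ζ) ∧
      f (y k l m ζ) = (y k l m ζ ⊗ₜ[k] (1 : H k l m ζ)) + ((g k l m ζ ^ m) ⊗ₜ[k] y k l m ζ) := by
  have hgmx := qcomm_pow_left ζ _ _ (rel_gx k l m ζ) m
  have hgmy := qcomm_pow_left (ζ ^ m) _ _ (rel_gy k l m ζ) m
  have hgx := rel_gx k l m ζ
  have hgy := rel_gy k l m ζ
  have hxy := rel_xy k l m ζ
  have hX := rel_xl k l m ζ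
  have hY := rel_yl k l m ζ
  have hG := rel_gl k l m ζ
  apply H_lift
  · rw [add_comm]
    refine qfrob ζ l (by omega) hζ _ _ ?_ ?_ ?_
    · simp only [Algebra.TensorProduct.tmul_mul_tmul, one_mul, mul_one, hgx,
        TensorProduct.tmul_smul]
    · simp [Algebra.TensorProduct.tmul_pow, hX]
    · simp [Algebra.TensorProduct.tmul_pow, hX]
  · refine qfrob ((ζ ^ m) ^ m) l (by omega) ?_ _ _ ?_ ?_ ?_
    · exact (hζ.pow_of_coprime m hgcd).pow_of_coprime m hgcd
    · simp only [Algebra.TensorProduct.tmul_mul_tmul, one_mul, mul_one, hgmy,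
        TensorProduct.smul_tmul']
    · simp [Algebra.TensorProduct.tmul_pow, hY]
    · simp [Algebra.TensorProduct.tmul_pow, hY]
  · simp [Algebra.TensorProduct.tmul_pow, hG, Algebra.TensorProduct.one_def]
  · simp only [mul_add, add_mul, Algebra.TensorProduct.tmul_mul_tmul, one_mul, mul_one, hgx,
      TensorProduct.tmul_smul, ← TensorProduct.smul_tmul', smul_add]
  · simp only [mul_add, add_mul, Algebra.TensorProduct.tmul_mul_tmul, one_mul, mul_one, hgy,
      TensorProduct.tmul_smul, ← TensorProduct.smul_tmul', smul_add, ← pow_succ, ← pow_succ']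
  · simp only [mul_add, add_mul, Algebra.TensorProduct.tmul_mul_tmul, one_mul, mul_one, hgy, hgmx,
      TensorProduct.tmul_smul, ← TensorProduct.smul_tmul', hxy]
    abel

theorem exists_counit (hl : 2 ≤ l) :
    ∃ f : H k l m ζ →ₐ[k] k, f (g k l m ζ) = 1 ∧ f (x k l m ζ) = 0 ∧ f (y k l m ζ) = 0 := by
  have : l ≠ 0 := by omega
  apply H_lift <;> simp [this]

theorem exists_antipode (hl : 2 ≤ l) :
    ∃ S : H k l m ζ →ₗ[k] H k l m ζ, S 1 = 1 ∧ (∀ a b, S (a * b) = S b * S a) ∧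
      S (g k l m ζ) = g k l m ζ ^ (l - 1) ∧
      S (x k l m ζ) = -(x k l m ζ * g k l m ζ ^ (l - 1)) ∧
      S (y k l m ζ) = -((g k l m ζ ^ (l - 1)) ^ m * y k l m ζ) := by
  have hgx := rel_gx k l m ζ
  have hgy := rel_gy k l m ζ
  have hxy := rel_xy k l m ζ
  have hX := rel_xl k l m ζ
  have hY := rel_yl k l m ζ
  have hG := rel_gl k l m ζ
  have hgG : g k l m ζ * g k l m ζ ^ (l - 1) = 1 := by
    rw [← pow_succ', Nat.sub_add_cancel (by omega), hG]
  have hGg : g k l m ζ ^ (l - 1) * g k l m ζ = 1 := by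
    rw [← pow_succ, Nat.sub_add_cancel (by omega), hG]
  have hGl : (g k l m ζ ^ (l - 1)) ^ l = 1 := by
    rw [← pow_mul, mul_comm, pow_mul, hG, one_pow]
  obtain ⟨f, hfg, hfx, hfy⟩ : ∃ f : H k l m ζ →ₐ[k] (H k l m ζ)ᵐᵒᵖ,
      f (g k l m ζ) = MulOpposite.op (g k l m ζ ^ (l - 1)) ∧
      f (x k l m ζ) = MulOpposite.op (-(x k l m ζ * g k l m ζ ^ (l - 1))) ∧
      f (y k l m ζ) = MulOpposite.op (-((g k l m ζ ^ (l - 1)) ^ m * y k l m ζ)) := by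
    obtain ⟨h1, h2, h3, h4, h5, h6⟩ := op_relations l m ζ _ _ _ _ hgx hgy hxy hX hY hgG hGg hGl
    exact H_lift k l m ζ _ _ _ h1 h2 h3 h4 h5 h6
  refine ⟨(MulOpposite.opLinearEquiv k).symm.toLinearMap ∘ₗ f.toLinearMap, ?_, ?_, ?_, ?_, ?_⟩
  · simp
  · intro a b; simp
  · simp [hfg]
  · simp [hfx]
  · simp [hfy]

end Maps

end Book

open Book in
/-- Andruskiewitsch–Hai book algebras: `h(ζ,m)` admits a Hopf algebra structure with the
indicated comultiplication, counit and antipode.  The Hopf algebra axioms (coassociativity,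
counit law, bialgebra compatibility — `Δ` and `ε` being algebra maps — and the antipode law)
are stated explicitly. -/
theorem statement14 (k : Type) [Field k] [IsAlgClosed k] [CharZero k]
    (l m : ℕ) (hl : 2 ≤ l) (hm : 0 < m) (hgcd : Nat.gcd m l = 1)
    (ζ : k) (hζ : IsPrimitiveRoot ζ l) :
    ∃ (comul : H k l m ζ →ₐ[k] (H k l m ζ ⊗[k] H k l m ζ))
      (counit : H k l m ζ →ₐ[k] k)
      (antipode : H k l m ζ →ₗ[k] H k l m ζ),
      -- coassociativity
      (∀ a : H k l m ζ,
        (TensorProduct.assoc k (H k l m ζ) (H k l m ζ) (H k l m ζ))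
            (LinearMap.rTensor (H k l m ζ) comul.toLinearMap (comul a)) =
          LinearMap.lTensor (H k l m ζ) comul.toLinearMap (comul a)) ∧
      -- counit laws
      (∀ a : H k l m ζ,
        (TensorProduct.lid k (H k l m ζ))
            (LinearMap.rTensor (H k l m ζ) counit.toLinearMap (comul a)) = a) ∧
      (∀ a : H k l m ζ,
        (TensorProduct.rid k (H k l m ζ))
            (LinearMap.lTensor (H k l m ζ) counit.toLinearMap (comul a)) = a) ∧
      -- antipode laws
      (∀ a : H k l m ζ,
        LinearMap.mul' k (H k l m ζ)
            (LinearMap.rTensor (H k l m ζ) antipode (comul a)) =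
          algebraMap k (H k l m ζ) (counit a)) ∧
      (∀ a : H k l m ζ,
        LinearMap.mul' k (H k l m ζ)
            (LinearMap.lTensor (H k l m ζ) antipode (comul a)) =
          algebraMap k (H k l m ζ) (counit a)) ∧
      -- values on the generators
      comul (x k l m ζ) = (x k l m ζ ⊗ₜ[k] g k l m ζ) + ((1 : H k l m ζ) ⊗ₜ[k] x k l m ζ) ∧
      comul (y k l m ζ) = (y k l m ζ ⊗ₜ[k] (1 : H k l m ζ)) + ((g k l m ζ ^ m) ⊗ₜ[k] y k l m ζ) ∧
      comul (g k l m ζ) = g k l m ζ ⊗ₜ[k] g k l m ζ ∧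
      counit (x k l m ζ) = 0 ∧
      counit (y k l m ζ) = 0 ∧
      counit (g k l m ζ) = 1 ∧
      antipode (x k l m ζ) = -(x k l m ζ * g k l m ζ ^ (l - 1)) ∧
      antipode (y k l m ζ) = -((g k l m ζ ^ (l - 1)) ^ m * y k l m ζ) ∧
      antipode (g k l m ζ) = g k l m ζ ^ (l - 1) := by
  obtain ⟨Δ, hΔg, hΔx, hΔy⟩ := exists_comul k l m ζ hl hgcd hζ
  obtain ⟨ε, hεg, hεx, hεy⟩ := exists_counit k l m ζ hl
  obtain ⟨S, hS1, hSm, hSg, hSx, hSy⟩ := exists_antipode k l m ζ hl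
  have hG := rel_gl k l m ζ
  have hgG : g k l m ζ * g k l m ζ ^ (l - 1) = 1 := by
    rw [← pow_succ', Nat.sub_add_cancel (by omega), hG]
  have hGg : g k l m ζ ^ (l - 1) * g k l m ζ = 1 := by
    rw [← pow_succ, Nat.sub_add_cancel (by omega), hG]
  have hcomm : Commute (g k l m ζ) (g k l m ζ ^ (l - 1)) := by
    rw [Commute, SemiconjBy, hgG, hGg]
  have hGgm : (g k l m ζ ^ (l - 1)) ^ m * g k l m ζ ^ m = 1 := by
    rw [← hcomm.symm.mul_pow, hGg, one_pow]
  have hgGm : g k l m ζ ^ m * (g k l m ζ ^ (l - 1)) ^ m = 1 := by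
    rw [← hcomm.mul_pow, hgG, one_pow]
  have hSgm : S (g k l m ζ ^ m) = (g k l m ζ ^ (l - 1)) ^ m := by
    have : ∀ n : ℕ, S (g k l m ζ ^ n) = (g k l m ζ ^ (l - 1)) ^ n := by
      intro n
      induction n with
      | zero => simp [hS1]
      | succ n ih => rw [pow_succ, hSm, ih, hSg, ← pow_succ']
    exact this m
  refine ⟨Δ, ε, S, ?_, ?_, ?_, ?_, ?_, hΔx, hΔy, hΔg, hεx, hεy, hεg, hSx, hSy, hSg⟩
  · intro a
    refine H_hom_ext k l m ζ
      (((Algebra.TensorProduct.assoc k k k (H k l m ζ) (H k l m ζ) (H k l m ζ)).toAlgHom.comp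
        (Algebra.TensorProduct.map Δ (AlgHom.id k (H k l m ζ)))).comp Δ)
      ((Algebra.TensorProduct.map (AlgHom.id k (H k l m ζ)) Δ).comp Δ) ?_ ?_ ?_ a
    · simp [hΔg]
    · simp [hΔg, hΔx, TensorProduct.add_tmul, TensorProduct.tmul_add,
        Algebra.TensorProduct.one_def, add_assoc]
    · simp [hΔg, hΔy, TensorProduct.add_tmul, TensorProduct.tmul_add,
        Algebra.TensorProduct.one_def, add_assoc, Algebra.TensorProduct.tmul_pow]
  · intro a
    refine H_hom_ext k l m ζ
      (((Algebra.TensorProduct.lid k (H k l m ζ)).toAlgHom.comp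
        (Algebra.TensorProduct.map ε (AlgHom.id k (H k l m ζ)))).comp Δ)
      (AlgHom.id k (H k l m ζ)) ?_ ?_ ?_ a
    · simp [hΔg, hεg]
    · simp [hΔx, hεx]
    · simp [hΔy, hεy, hεg]
  · intro a
    refine H_hom_ext k l m ζ
      (((Algebra.TensorProduct.rid k k (H k l m ζ)).toAlgHom.comp
        (Algebra.TensorProduct.map (AlgHom.id k (H k l m ζ)) ε)).comp Δ)
      (AlgHom.id k (H k l m ζ)) ?_ ?_ ?_ a
    · simp [hΔg, hεg]
    · simp [hΔx, hεx, hεg]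
    · simp [hΔy, hεy]
  · intro a
    induction a using H_induction with
    | halg r =>
      rw [AlgHom.commutes, AlgHom.commutes, Algebra.algebraMap_eq_smul_one, map_smul, map_smul,
        Algebra.TensorProduct.one_def]
      simp [hS1, Algebra.algebraMap_eq_smul_one]
    | hadd a b ha hb => simp only [map_add, ha, hb]
    | hmul a b ha hb => rw [map_mul, mulS_left_law S hSm _ _ _ ha, hb, map_mul, map_mul]
    | hg => simp [hΔg, hεg, hSg, hGg]
    | hx => simpa [hΔx, hεx, hSx, hS1] using anti_x _ _ _ hGg
    | hy => simp [hΔy, hεy, hSy, hSgm]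
  · intro a
    induction a using H_induction with
    | halg r =>
      rw [AlgHom.commutes, AlgHom.commutes, Algebra.algebraMap_eq_smul_one, map_smul, map_smul,
        Algebra.TensorProduct.one_def]
      simp [hS1, Algebra.algebraMap_eq_smul_one]
    | hadd a b ha hb => simp only [map_add, ha, hb]
    | hmul a b ha hb => rw [map_mul, mulS_right_law S hSm _ _ _ hb, ha, map_mul, map_mul]
    | hg => simp [hΔg, hεg, hSg, hgG]
    | hx => simp [hΔx, hεx, hSx, hSg]
    | hy => simpa [hΔy, hεy, hSy, hS1] using anti_y _ _ _ hgGm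
end
end
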